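/- arXiv:1805.01504 — 2 statements merged into one kernel-verified Lean document; each statement's English description precedes it below -/
import Mathlib

section
/- (Gessel) Let C_n = [0,1]^n ⊂ ℝ^n be the unit n-cube and let (f_F), (g_F) be Stanley's f- and g-polynomials of its faces. Then, as an identity in ℚ[x], g_{C_n}(x) = Σ_{k=0}^{⌊n/2⌋} (1/(n−k+1)) · binom(n,k) · binom(2n−2k, n) · (x−1)^k. -/
/-!
Write `y = x - 1` and `G_n = ∑_k Cat(n-k) binom(n-k,k) y^k` (`cubePoly`); since
`Cat(n-k) binom(n-k,k) = binom(n,k) binom(2n-2k,n) / (n-k+1)` (`catalan_mul_choose`), this is the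
claimed value of `g_{C_n}`. The proof shows `g_F = G_{dim F}` for all faces `F`, by strong
induction on the dimension.

*Geometry.* The faces of the cube correspond bijectively to sign vectors `σ : Fin n → SignType`:
the maximizers of a functional `u` are obtained by fixing coordinate `i` to `0` or `1` according to
the sign of `u(e_i)`, and leaving it free if `u(e_i) = 0` (`isFaceOf_cube_iff`). The dimension is
the number of zeros of `σ` (`faceDim_cubeFace`), and a `k`-dimensional face has
`binom(k,d) 2^(k-d)` faces of dimension `d` (`card_subfaces`). Hence, by induction,
`G_k + y f_F = y^(k+1) + ∑_{d ≤ k} binom(k,d) 2^(k-d) y^(k-d) G_d` if `dim F = k`.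

*The functional equation.* The right-hand side equals `x^(k+1) G_k(1/x)`
(`cubePoly_identity`), so it is divisible by `x^(⌊k/2⌋+1)` because `deg G_k ≤ ⌊k/2⌋`. Thus `G_k`
agrees with `(1 - x) f_F` up to degree `⌊k/2⌋`, which is the definition of `g_F`
(`cubePoly_eq_truncation`). With `Cat(z)` the Catalan series, `∑ G_n t^n = Cat(t(1 + yt))`, so the
two sides of the identity have the generating functions
`L = x Cat(x t(1 - yt))` and `R = y/(1-yt) + (1-2yt)⁻¹ Cat(t(1-yt)/(1-2yt)²)`. Both solve
`A = x + t(1-yt) A²`, and this equation has only one power series solution (`sq_eq_unique`).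
-/

open scoped Pointwise Classical
open MeasureTheory Polynomial

noncomputable section

/-- The real vector corresponding to an integer vector in `ℤ^n ⊂ ℝ^n`. -/
def intVec {n : ℕ} (m : Fin n → ℤ) : Fin n → ℝ := fun i => (m i : ℝ)

/-- `F` is a face of the polytope `P`: either `P` itself or a nonempty set of maximizers
over `P` of a linear functional. -/
def IsFaceOf {n : ℕ} (P F : Set (Fin n → ℝ)) : Prop :=
  F = P ∨ (F.Nonempty ∧ ∃ u : (Fin n → ℝ) →ₗ[ℝ] ℝ,
    F = {x | x ∈ P ∧ ∀ p ∈ P, u p ≤ u x})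

/-- The dimension of (the affine span of) a face. -/
noncomputable def faceDim {n : ℕ} (F : Set (Fin n → ℝ)) : ℕ :=
  Module.finrank ℝ (affineSpan ℝ F).direction

/-- A polytope `P ⊂ ℝ^n` is simple if every vertex (`0`-dimensional face) lies on
exactly `n` edges (`1`-dimensional faces). -/
def IsSimple {n : ℕ} (P : Set (Fin n → ℝ)) : Prop :=
  ∀ v, IsFaceOf P v → faceDim v = 0 →
    {E | IsFaceOf P E ∧ faceDim E = 1 ∧ v ⊆ E}.ncard = n

/-- The polynomial `∑_k Cat(n-k) binom(n-k,k) y^k`, which for `y = x - 1` is the `g`-polynomial of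
the `n`-cube. The summands with `k > n / 2` vanish. -/
def cubePoly {R : Type*} [CommRing R] (y : R) (n : ℕ) : R :=
  ∑ k ∈ Finset.range (n + 1), ((catalan (n - k) * (n - k).choose k : ℕ) : R) * y ^ k

/-! ### Generating functions -/

section Series
variable {R : Type*} [CommRing R]

lemma hasSubst_X_mul (v : PowerSeries R) : PowerSeries.HasSubst (PowerSeries.X * v) :=
  PowerSeries.HasSubst.of_constantCoeff_zero' (by simp)

/-- Coefficient extraction for `w(t) f(t v(t))`. The factor `w` is included because the
binomial transform is `(1 - at)⁻¹ f(t (1 - at)⁻¹)`. -/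
lemma coeff_mul_subst_X_mul (w v f : PowerSeries R) (n : ℕ) :
    PowerSeries.coeff n (w * f.subst (PowerSeries.X * v)) =
      ∑ d ∈ Finset.range (n + 1), PowerSeries.coeff d f * PowerSeries.coeff (n - d) (w * v ^ d) := by
  have key : ∀ m, PowerSeries.coeff m (f.subst (PowerSeries.X * v)) =
      ∑ d ∈ Finset.range (n + m + 1), PowerSeries.coeff d f *
        PowerSeries.coeff m (PowerSeries.X ^ d * v ^ d) := by
    intro m
    rw [PowerSeries.coeff_subst' (hasSubst_X_mul v), finsum_eq_sum_of_support_subset (s := Finset.range (n + m + 1))]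
    · simp only [mul_pow, smul_eq_mul]
    · intro d hd
      simp only [Function.mem_support, mul_pow, smul_eq_mul, PowerSeries.coeff_X_pow_mul'] at hd
      simp only [Finset.coe_range, Set.mem_Iio]
      by_contra h
      apply hd
      rw [if_neg (by omega), mul_zero]
  have key2 : ∀ m ≤ n, PowerSeries.coeff m (f.subst (PowerSeries.X * v)) =
      ∑ d ∈ Finset.range (n + 1), PowerSeries.coeff d f *
        PowerSeries.coeff m (PowerSeries.X ^ d * v ^ d) := by
    intro m hm
    rw [key]
    symm
    apply Finset.sum_subset
    · intro a; simp; omega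
    · intro d _ hd
      simp only [Finset.mem_range] at hd
      rw [PowerSeries.coeff_X_pow_mul', if_neg (by omega), mul_zero]
  rw [PowerSeries.coeff_mul]
  rw [Finset.sum_congr rfl (fun p hp => by
    rw [key2 p.2 (by have := Finset.HasAntidiagonal.mem_antidiagonal.1 hp; omega), Finset.mul_sum])]
  rw [Finset.sum_comm]
  refine Finset.sum_congr rfl fun d hd => ?_
  have e : PowerSeries.coeff (n - d) (w * v ^ d) =
      PowerSeries.coeff n (w * (PowerSeries.X ^ d * v ^ d)) := by
    rw [show w * (PowerSeries.X ^ d * v ^ d) = PowerSeries.X ^ d * (w * v ^ d) by ring,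
      PowerSeries.coeff_X_pow_mul', if_pos (by simpa [Nat.lt_succ_iff] using hd)]
  rw [e, PowerSeries.coeff_mul, Finset.mul_sum]
  exact Finset.sum_congr rfl fun p _ => by ring

lemma coeff_one_add_C_mul_X_pow (a : R) (d m : ℕ) :
    PowerSeries.coeff m ((1 + PowerSeries.C a * PowerSeries.X) ^ d) = (d.choose m : R) * a ^ m := by
  have : (1 + PowerSeries.C a * PowerSeries.X : PowerSeries R) ^ d =
      PowerSeries.rescale a (((1 + Polynomial.X : R[X]) ^ d : R[X]) : PowerSeries R) := by
    simp
  rw [this, PowerSeries.coeff_rescale, Polynomial.coeff_coe, Polynomial.coeff_one_add_X_pow, mul_comm]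

/-- The geometric series `1 / (1 - a X)`. -/
def geom (a : R) : PowerSeries R := PowerSeries.mk fun n => a ^ n

lemma geom_mul (a : R) : geom a * (1 - PowerSeries.C a * PowerSeries.X) = 1 := by
  ext n
  cases n with
  | zero => simp [geom, mul_sub, ← mul_assoc]
  | succ n =>
    rw [mul_sub, mul_one, ← mul_assoc, map_sub, PowerSeries.coeff_succ_mul_X,
      PowerSeries.coeff_mul_C]
    simp [geom, pow_succ, PowerSeries.coeff_one]

lemma coeff_geom_pow_succ (a : R) (d m : ℕ) :
    PowerSeries.coeff m (geom a ^ (d + 1)) = ((d + m).choose d : R) * a ^ m := by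
  have : geom a = PowerSeries.rescale a (PowerSeries.mk 1) := by
    ext n; simp [geom]
  rw [this, ← map_pow, PowerSeries.mk_one_pow_eq_mk_choose_add, PowerSeries.coeff_rescale]
  simp [mul_comm]

variable (R) in
/-- The Catalan generating function with coefficients in `R`. -/
def catSeries : PowerSeries R := PowerSeries.map (Nat.castRingHom R) PowerSeries.catalanSeries

lemma coeff_catSeries (n : ℕ) : PowerSeries.coeff n (catSeries R) = (catalan n : R) := by
  simp [catSeries]

lemma catSeries_eq : catSeries R = 1 + PowerSeries.X * catSeries R ^ 2 := by
  have := congrArg (PowerSeries.map (Nat.castRingHom R)) PowerSeries.catalanSeries_sq_mul_X_add_one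
  simp only [map_add, map_mul, map_pow, map_one, PowerSeries.map_X] at this
  change catSeries R ^ 2 * _ + 1 = catSeries R at this
  rw [mul_comm, add_comm] at this
  exact this.symm

/-- Quadratic equations of Catalan type are preserved by substitution. -/
lemma subst_eq {f : PowerSeries R} {b : PowerSeries R} (v : PowerSeries R)
    (h : f = 1 + b * f ^ 2) :
    f.subst (PowerSeries.X * v) =
      1 + b.subst (PowerSeries.X * v) * (f.subst (PowerSeries.X * v)) ^ 2 := by
  have hs := hasSubst_X_mul v
  have := congrArg (PowerSeries.substAlgHom (R := R) hs) h
  simpa only [map_add, map_mul, map_pow, map_one, PowerSeries.coe_substAlgHom] using this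

/-- The equation `A = x + t v A²` has at most one solution: the difference of two solutions is
killed by the unit `1 - t v (A + B)`. -/
lemma sq_eq_unique {x : R} {v A B : PowerSeries R}
    (hA : A = PowerSeries.C x + PowerSeries.X * v * A ^ 2)
    (hB : B = PowerSeries.C x + PowerSeries.X * v * B ^ 2) : A = B := by
  have h : (A - B) * (1 - PowerSeries.X * v * (A + B)) = 0 := by
    linear_combination hA - hB
  have hu : IsUnit (1 - PowerSeries.X * v * (A + B)) := by
    rw [PowerSeries.isUnit_iff_constantCoeff]
    simp
  exact sub_eq_zero.1 ((hu.mul_left_eq_zero).1 h)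

/-- The series `Cat(t(1 + yt))`, the ordinary generating function of `cubePoly y`. -/
def cubeSeries (y : R) : PowerSeries R :=
  (catSeries R).subst (PowerSeries.X * (1 + PowerSeries.C y * PowerSeries.X))

lemma cubeSeries_eq (y : R) : cubeSeries y =
    1 + PowerSeries.X * (1 + PowerSeries.C y * PowerSeries.X) * cubeSeries y ^ 2 := by
  have := subst_eq (1 + PowerSeries.C y * PowerSeries.X) (catSeries_eq (R := R))
  rwa [PowerSeries.subst_X (hasSubst_X_mul _)] at this

lemma coeff_cubeSeries (y : R) (n : ℕ) : PowerSeries.coeff n (cubeSeries y) = cubePoly y n := by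
  have := coeff_mul_subst_X_mul 1 (1 + PowerSeries.C y * PowerSeries.X) (catSeries R) n
  rw [one_mul] at this
  rw [cubeSeries, this, cubePoly, ← Finset.sum_range_reflect]
  refine Finset.sum_congr rfl fun k hk => ?_
  have hk' : k ≤ n := by simpa [Nat.lt_succ_iff] using hk
  rw [one_mul, coeff_one_add_C_mul_X_pow, coeff_catSeries, show n + 1 - 1 - k = n - k by omega,
    show n - (n - k) = k by omega]
  push_cast; ring

/-- The functional equation of `cubePoly`. For `y = x - 1` the left-hand side is
`x^(n+1) G_n(1/x)`, since `1/x - 1 = -y/x`. -/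
theorem cubePoly_identity (y : R) (n : ℕ) :
    ∑ k ∈ Finset.range (n + 1), ((catalan (n - k) * (n - k).choose k : ℕ) : R) *
        ((-y) ^ k * (y + 1) ^ (n + 1 - k)) =
      y ^ (n + 1) + ∑ d ∈ Finset.range (n + 1),
        ((n.choose d * 2 ^ (n - d) : ℕ) : R) * (cubePoly y d * y ^ (n - d)) := by
  set X : PowerSeries R := PowerSeries.X with hX
  set Y : PowerSeries R := PowerSeries.C y with hY
  set S : PowerSeries R := (catSeries R).subst
    (X * (PowerSeries.C (y + 1) * (1 + PowerSeries.C (-y) * X))) with hS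
  have hSeq : S = 1 + X * (PowerSeries.C (y + 1) * (1 + PowerSeries.C (-y) * X)) * S ^ 2 := by
    have := subst_eq (PowerSeries.C (y + 1) * (1 + PowerSeries.C (-y) * X))
      (catSeries_eq (R := R))
    rwa [PowerSeries.subst_X (hasSubst_X_mul _)] at this
  set I := geom (2 * y) with hI
  have hIm : I * (1 - 2 * Y * X) = 1 := by
    have := geom_mul (2 * y)
    rw [map_mul, show PowerSeries.C (2 : R) = 2 from map_ofNat _ _] at this
    exact this
  set J := geom y with hJ
  have hJm : J * (1 - Y * X) = 1 := geom_mul y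
  set T := (cubeSeries y).subst (X * I) with hT
  have hTeq : T = 1 + X * I * (1 + Y * (X * I)) * T ^ 2 := by
    have := subst_eq I (cubeSeries_eq y)
    have hs := hasSubst_X_mul I
    rw [PowerSeries.subst_mul hs, PowerSeries.subst_add hs, PowerSeries.subst_mul hs,
      PowerSeries.subst_X hs] at this
    have h1 : PowerSeries.subst (X * I) (1 : PowerSeries R) = 1 := by
      rw [← PowerSeries.coe_substAlgHom hs, map_one]
    have h2 : PowerSeries.subst (X * I) (PowerSeries.C y : PowerSeries R) = Y :=
      PowerSeries.subst_C _
    rw [h1, h2] at this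
    exact this
  have main : PowerSeries.C (y + 1) * S = Y * J + I * T := by
    have hn : PowerSeries.C (-y) = -Y := map_neg _ _
    have hx : PowerSeries.C (y + 1) = Y + 1 := by rw [map_add, map_one]
    apply sq_eq_unique (x := y + 1) (v := 1 - Y * X)
    · rw [hn, hx] at hSeq
      rw [hx]
      linear_combination (Y + 1) * hSeq
    · rw [hx]
      -- `I * T` is the series `(1-2yt)⁻¹ Cat(t(1-yt)/(1-2yt)²)`
      have hD : T = 1 + X * (1 - Y * X) * (I * T) ^ 2 := by
        have e : I * (1 + Y * (X * I)) = (1 - Y * X) * I ^ 2 := by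
          linear_combination (-I) * hIm
        linear_combination hTeq + X * T ^ 2 * e
      linear_combination (Y - X * Y ^ 2 * J - 2 * X * Y * I * T) * hJm + T * hIm + hD
  have hL : PowerSeries.coeff n (PowerSeries.C (y + 1) * S) =
      ∑ k ∈ Finset.range (n + 1), ((catalan (n - k) * (n - k).choose k : ℕ) : R) *
        ((-y) ^ k * (y + 1) ^ (n + 1 - k)) := by
    rw [coeff_mul_subst_X_mul, ← Finset.sum_range_reflect]
    refine Finset.sum_congr rfl fun k hk => ?_
    have hk' : k ≤ n := by simpa [Nat.lt_succ_iff] using hk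
    rw [show n + 1 - 1 - k = n - k by omega, show n - (n - k) = k by omega, mul_pow, ← mul_assoc,
      ← pow_succ', ← map_pow, PowerSeries.coeff_C_mul, coeff_one_add_C_mul_X_pow, coeff_catSeries,
      show n + 1 - k = n - k + 1 by omega]
    push_cast; ring
  have hR : PowerSeries.coeff n (Y * J + I * T) =
      y ^ (n + 1) + ∑ d ∈ Finset.range (n + 1),
        ((n.choose d * 2 ^ (n - d) : ℕ) : R) * (cubePoly y d * y ^ (n - d)) := by
    rw [map_add, PowerSeries.coeff_C_mul, coeff_mul_subst_X_mul]
    congr 1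
    · simp [hJ, geom, pow_succ']
    · refine Finset.sum_congr rfl fun d hd => ?_
      have hd' : d ≤ n := by simpa [Nat.lt_succ_iff] using hd
      rw [← pow_succ', coeff_geom_pow_succ, coeff_cubeSeries, show d + (n - d) = n by omega,
        mul_pow]
      push_cast; ring
  rw [← hL, ← hR, main]
end Series

/-! ### Faces of the cube -/

section Faces
variable {n : ℕ}

/-- The face of `[0,1]` maximizing a functional of sign `s`: `{0}`, `[0,1]` or `{1}` for
`s = -1, 0, 1`. -/
def side (s : SignType) : Set ℝ :=
  {t | t ∈ Set.Icc (0 : ℝ) 1 ∧ (s = -1 → t = 0) ∧ (s = 1 → t = 1)}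

/-- The face of the cube attached to a sign vector: a product of faces of `[0,1]`. -/
def cubeFace (σ : Fin n → SignType) : Set (Fin n → ℝ) := {x | ∀ i, x i ∈ side (σ i)}

/-- The number of free coordinates of a sign vector. -/
def zeros (σ : Fin n → SignType) : ℕ := (Finset.univ.filter fun i => σ i = 0).card

lemma side_zero : side 0 = Set.Icc (0 : ℝ) 1 := by
  ext t; simp [side]

/-- A vertex of `cubeFace σ`, with all free coordinates equal to `0`. -/
def corner (σ : Fin n → SignType) : Fin n → ℝ := fun i => if σ i = 1 then 1 else 0

lemma corner_mem (σ : Fin n → SignType) : corner σ ∈ cubeFace σ := by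
  intro i
  by_cases h : σ i = 1 <;> simp [corner, side, h]

lemma update_corner_mem (σ : Fin n → SignType) {i : Fin n} {t : ℝ} (ht : t ∈ side (σ i)) :
    Function.update (corner σ) i t ∈ cubeFace σ := by
  intro j
  by_cases h : j = i
  · subst h; simpa using ht
  · simpa [h] using corner_mem σ j

lemma side_subset_iff (s t : SignType) : side s ⊆ side t ↔ t = 0 ∨ s = t := by
  constructor
  · intro h
    have h0 : (0 : ℝ) ∈ side s → (0 : ℝ) ∈ side t := fun a => h a
    have h1 : (1 : ℝ) ∈ side s → (1 : ℝ) ∈ side t := fun a => h a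
    revert h0 h1
    cases s <;> cases t <;> simp [side]
  · rintro (rfl | rfl)
    · rw [side_zero]; exact fun x hx => hx.1
    · exact subset_rfl

lemma cubeFace_subset_iff (σ τ : Fin n → SignType) :
    cubeFace σ ⊆ cubeFace τ ↔ ∀ i, τ i = 0 ∨ σ i = τ i := by
  simp only [← side_subset_iff]
  constructor
  · intro h i t ht
    simpa using h (update_corner_mem σ ht) i
  · intro h x hx i
    exact h i (hx i)

lemma cubeFace_injective : Function.Injective (cubeFace (n := n)) := by
  intro σ τ h
  funext i
  have h1 := (cubeFace_subset_iff σ τ).1 h.le i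
  have h2 := (cubeFace_subset_iff τ σ).1 h.ge i
  grind

lemma linear_apply (u : (Fin n → ℝ) →ₗ[ℝ] ℝ) (x : Fin n → ℝ) :
    u x = ∑ i, x i * u (Pi.single i 1) := by
  conv_lhs => rw [← Finset.univ_sum_single x, map_sum]
  refine Finset.sum_congr rfl fun i _ => ?_
  rw [show Pi.single i (x i) = x i • (Pi.single i 1 : Fin n → ℝ) by
    rw [← Pi.single_smul]; simp, map_smul, smul_eq_mul]

lemma maximizers_eq (u : (Fin n → ℝ) →ₗ[ℝ] ℝ) :
    {x | x ∈ Set.Icc (0 : Fin n → ℝ) 1 ∧ ∀ p ∈ Set.Icc (0 : Fin n → ℝ) 1, u p ≤ u x} =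
      cubeFace fun i => SignType.sign (u (Pi.single i 1)) := by
  ext x
  constructor
  · rintro ⟨hx, hmax⟩ i
    -- moving the single coordinate `i` to `t` stays in the cube
    have key : ∀ t ∈ Set.Icc (0 : ℝ) 1, (t - x i) * u (Pi.single i 1) ≤ 0 := by
      intro t ht
      have hp : x + Pi.single i (t - x i) ∈ Set.Icc (0 : Fin n → ℝ) 1 := by
        constructor <;> intro j <;> by_cases h : j = i
        · subst h; simpa using ht.1
        · simpa [h] using hx.1 j
        · subst h; simpa using ht.2
        · simpa [h] using hx.2 j
      have := hmax _ hp
      rw [map_add, show Pi.single i (t - x i) = (t - x i) • (Pi.single i 1 : Fin n → ℝ) by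
        rw [← Pi.single_smul]; simp, map_smul, smul_eq_mul] at this
      linarith
    have h0 : 0 ≤ x i := hx.1 i
    have h1 : x i ≤ 1 := hx.2 i
    refine ⟨⟨h0, h1⟩, fun h => ?_, fun h => ?_⟩
    · have hneg := sign_eq_neg_one_iff.1 h
      have := key 0 (by simp)
      nlinarith
    · have hpos := sign_eq_one_iff.1 h
      have := key 1 (by simp)
      nlinarith
  · intro hx
    refine ⟨⟨fun i => (hx i).1.1, fun i => (hx i).1.2⟩, fun p hp => ?_⟩
    rw [linear_apply u p, linear_apply u x]
    refine Finset.sum_le_sum fun i _ => ?_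
    have h0 : 0 ≤ p i := hp.1 i
    have h1 : p i ≤ 1 := hp.2 i
    rcases lt_trichotomy (u (Pi.single i 1)) 0 with h | h | h
    · rw [(hx i).2.1 (sign_neg h)]; nlinarith
    · simp [h]
    · rw [(hx i).2.2 (sign_pos h)]; nlinarith

lemma cubeFace_zero : cubeFace (0 : Fin n → SignType) = Set.Icc 0 1 := by
  ext x
  simp [cubeFace, side_zero, Pi.le_def, forall_and]

lemma isFaceOf_cube_iff (F : Set (Fin n → ℝ)) :
    IsFaceOf (Set.Icc (0 : Fin n → ℝ) 1) F ↔ ∃ σ, F = cubeFace σ := by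
  constructor
  · rintro (rfl | ⟨_, u, rfl⟩)
    · exact ⟨0, cubeFace_zero.symm⟩
    · exact ⟨_, maximizers_eq u⟩
  · rintro ⟨σ, rfl⟩
    refine Or.inr ⟨⟨_, corner_mem σ⟩,
      ∑ i, (σ i : ℝ) • (LinearMap.proj i : (Fin n → ℝ) →ₗ[ℝ] ℝ), ?_⟩
    rw [maximizers_eq]
    congr 1
    funext i
    have : (∑ j, (σ j : ℝ) • (LinearMap.proj j : (Fin n → ℝ) →ₗ[ℝ] ℝ)) (Pi.single i 1) = σ i := by
      simp [LinearMap.sum_apply, Pi.single_apply]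
    rw [this]
    cases σ i <;> simp

lemma faceDim_cubeFace (σ : Fin n → SignType) : faceDim (cubeFace σ) = zeros σ := by
  have hspan : (affineSpan ℝ (cubeFace σ)).direction =
      Submodule.span ℝ (Set.range fun i : {i // σ i = 0} => (Pi.single i.1 1 : Fin n → ℝ)) := by
    rw [direction_affineSpan]
    apply le_antisymm
    · rw [vectorSpan_def, Submodule.span_le]
      rintro _ ⟨x, hx, z, hz, rfl⟩
      have hxz : x - z = ∑ i, (x i - z i) • (Pi.single i 1 : Fin n → ℝ) := by
        ext j; simp [Finset.sum_apply, Pi.single_apply]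
      change x - z ∈ Submodule.span ℝ _
      rw [hxz]
      refine Submodule.sum_mem _ fun i _ => ?_
      by_cases h : σ i = 0
      · exact Submodule.smul_mem _ _ (Submodule.subset_span ⟨⟨i, h⟩, rfl⟩)
      · have : x i = z i := by
          have hx' := hx i
          have hz' := hz i
          revert h hx' hz'
          cases σ i <;> simp +contextual [side]
        simp [this]
    · rw [Submodule.span_le]
      rintro _ ⟨⟨i, hi⟩, rfl⟩
      have h1 : Function.update (corner σ) i 1 ∈ cubeFace σ :=
        update_corner_mem σ (by rw [hi, side_zero]; simp)
      have := vsub_mem_vectorSpan ℝ h1 (corner_mem σ)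
      have e : (Pi.single i 1 : Fin n → ℝ) = Function.update (corner σ) i 1 -ᵥ corner σ := by
        ext j
        by_cases h : j = i
        · subst h; simp [corner, hi]
        · simp [h]
      change (Pi.single i 1 : Fin n → ℝ) ∈ vectorSpan ℝ (cubeFace σ)
      rwa [e]
  have hli : LinearIndependent ℝ fun i : {i // σ i = 0} => (Pi.single i.1 1 : Fin n → ℝ) := by
    have := (Pi.basisFun ℝ (Fin n)).linearIndependent.comp
      (Subtype.val : {i // σ i = 0} → Fin n) Subtype.val_injective
    convert this using 1
    funext i
    simp
  rw [faceDim, hspan, finrank_span_eq_card hli, Fintype.card_subtype, zeros]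

/-- The subfaces of a `k`-dimensional face, counted by dimension, have generating polynomial
`(X + 2)^k`: each free coordinate stays free or is fixed in one of two ways. -/
lemma card_subfaces (σ : Fin n → SignType) (d : ℕ) :
    (Finset.univ.filter fun τ : Fin n → SignType =>
      (∀ i, σ i = 0 ∨ τ i = σ i) ∧ zeros τ = d).card =
      (zeros σ).choose d * 2 ^ (zeros σ - d) := by
  have hprod : ∑ τ ∈ Fintype.piFinset (fun i => Finset.univ.filter fun s => σ i = 0 ∨ s = σ i),
      (X : ℕ[X]) ^ zeros τ = (X + C 2) ^ zeros σ := by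
    have h1 : ∀ τ : Fin n → SignType, (X : ℕ[X]) ^ zeros τ = ∏ i, if τ i = 0 then X else 1 := by
      intro τ
      rw [Finset.prod_ite, Finset.prod_const, Finset.prod_const_one, mul_one, zeros]
    simp only [h1]
    rw [← Finset.prod_univ_sum
      (fun i => Finset.univ.filter fun s => σ i = 0 ∨ s = σ i)
      (fun _ s => if s = 0 then (X : ℕ[X]) else 1), zeros, ← Finset.prod_const, Finset.prod_filter]
    refine Finset.prod_congr rfl fun i _ => ?_
    by_cases h : σ i = 0
    · have : (Finset.univ : Finset SignType) = {0, -1, 1} := by decide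
      rw [if_pos h]
      simp only [h, true_or, Finset.filter_true, this]
      rw [Finset.sum_insert (by decide), Finset.sum_insert (by decide), Finset.sum_singleton,
        if_pos rfl, if_neg (by decide), if_neg (by decide), one_add_one_eq_two]
      rfl
    · simp only [h, false_or, if_false, Finset.sum_filter, Finset.sum_ite_eq', Finset.mem_univ,
        if_true]
  have hset : Fintype.piFinset (fun i => Finset.univ.filter fun s => σ i = 0 ∨ s = σ i) =
      Finset.univ.filter fun τ : Fin n → SignType => ∀ i, σ i = 0 ∨ τ i = σ i := by
    ext τ; simp
  have := congrArg (fun p : ℕ[X] => p.coeff d) hprod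
  simp only [coeff_X_add_C_pow, finsetSum_coeff, hset, Finset.sum_filter] at this
  rw [Finset.card_filter, mul_comm, ← Nat.cast_id (Nat.choose _ _), ← this]
  refine Finset.sum_congr rfl fun τ _ => ?_
  rw [ite_and]
  by_cases h : ∀ i, σ i = 0 ∨ τ i = σ i
  · rw [if_pos h, if_pos h, coeff_X_pow]
    simp only [eq_comm]
  · rw [if_neg h, if_neg h, coeff_zero]

lemma sum_subfaces {M : Type*} [CommSemiring M] (σ : Fin n → SignType) (h : ℕ → M) :
    ∑ τ ∈ Finset.univ.filter (fun τ : Fin n → SignType => ∀ i, σ i = 0 ∨ τ i = σ i), h (zeros τ) =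
      ∑ d ∈ Finset.range (zeros σ + 1),
        (((zeros σ).choose d * 2 ^ (zeros σ - d) : ℕ) : M) * h d := by
  rw [← Finset.sum_fiberwise_of_maps_to (t := Finset.range (zeros σ + 1)) (g := zeros)]
  · refine Finset.sum_congr rfl fun d _ => ?_
    rw [Finset.sum_congr rfl (g := fun _ => h d)
      (fun τ hτ => by rw [(Finset.mem_filter.1 hτ).2]), Finset.sum_const, Finset.filter_filter,
      card_subfaces, nsmul_eq_mul]
  · intro τ hτ
    rw [Finset.mem_range, Nat.lt_succ_iff]
    apply Finset.card_le_card
    intro i hi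
    have := (Finset.mem_filter.1 hτ).2 i
    simp only [Finset.mem_filter, Finset.mem_univ, true_and] at hi ⊢
    grind

lemma zeros_lt {σ τ : Fin n → SignType} (h : cubeFace τ ⊂ cubeFace σ) : zeros τ < zeros σ := by
  have hsub := (cubeFace_subset_iff τ σ).1 h.1
  apply Finset.card_lt_card
  refine ⟨fun i hi => ?_, fun hle => h.2 ((cubeFace_subset_iff σ τ).2 fun i => ?_)⟩
  · have := hsub i
    simp only [Finset.mem_filter, Finset.mem_univ, true_and] at hi ⊢
    grind
  · have h1 := hsub i
    have h2 : σ i = 0 → τ i = 0 := fun hi => by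
      simpa using hle (show i ∈ Finset.univ.filter fun i => σ i = 0 by simpa using hi)
    grind

end Faces
/-! ### Truncation and the closed formula -/

section Truncation

lemma cubePoly_eq_sum_half {R : Type*} [CommRing R] (y : R) (n : ℕ) :
    cubePoly y n = ∑ k ∈ Finset.range (n / 2 + 1),
      ((catalan (n - k) * (n - k).choose k : ℕ) : R) * y ^ k := by
  symm
  apply Finset.sum_subset
  · intro a; simp; omega
  · intro k hk hk'
    simp only [Finset.mem_range] at hk hk'
    rw [Nat.choose_eq_zero_of_lt (by omega)]
    simp

lemma natDegree_cubePoly_le (n : ℕ) : (cubePoly (X - 1 : ℚ[X]) n).natDegree ≤ n / 2 := by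
  rw [cubePoly_eq_sum_half]
  apply natDegree_sum_le_of_forall_le
  intro k hk
  have hk' : k ≤ n / 2 := by simpa [Nat.lt_succ_iff] using hk
  rw [← C_eq_natCast, ← C_1]
  refine (natDegree_C_mul_le _ _).trans (natDegree_pow_le.trans ?_)
  rw [natDegree_X_sub_C]
  omega

/-- Both sides of `cubePoly_identity` at `y = x - 1` vanish modulo `x^(⌊n/2⌋+1)`. -/
lemma X_pow_dvd_identity (n : ℕ) : (X : ℚ[X]) ^ (n / 2 + 1) ∣
    ((X - 1) ^ (n + 1) + ∑ d ∈ Finset.range (n + 1),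
        ((n.choose d * 2 ^ (n - d) : ℕ) : ℚ[X]) * (cubePoly (X - 1 : ℚ[X]) d * (X - 1) ^ (n - d))) := by
  rw [← cubePoly_identity]
  refine Finset.dvd_sum fun k hk => ?_
  by_cases h : k ≤ n / 2
  · rw [sub_add_cancel]
    exact Dvd.dvd.mul_left (Dvd.dvd.mul_left (pow_dvd_pow _ (by omega)) _) _
  · rw [Nat.choose_eq_zero_of_lt (by omega)]
    simp

/-- If `p` satisfies the relation that `f_F` satisfies for an `n`-dimensional face `F`, then the
truncation defining `g_F` gives `cubePoly`. -/
lemma cubePoly_eq_truncation (n : ℕ) (p : ℚ[X])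
    (hp : cubePoly (X - 1 : ℚ[X]) n + (X - 1) * p =
      (X - 1) ^ (n + 1) + ∑ d ∈ Finset.range (n + 1),
        ((n.choose d * 2 ^ (n - d) : ℕ) : ℚ[X]) *
          (cubePoly (X - 1 : ℚ[X]) d * (X - 1) ^ (n - d))) :
    C (p.coeff 0) + ∑ l ∈ Finset.Icc 1 (n / 2), C (p.coeff l - p.coeff (l - 1)) * X ^ l =
      cubePoly (X - 1 : ℚ[X]) n := by
  have hdvd := X_pow_dvd_identity n
  rw [← hp, X_pow_dvd_iff] at hdvd
  ext m
  rw [coeff_add, coeff_C, finsetSum_coeff]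
  simp only [coeff_C_mul_X_pow, Finset.sum_ite_eq, Finset.mem_Icc]
  rcases Nat.lt_or_ge (n / 2) m with hm | hm
  · rw [coeff_eq_zero_of_natDegree_lt ((natDegree_cubePoly_le n).trans_lt hm), if_neg (by omega),
      if_neg (by omega), add_zero]
  · have := hdvd m (by omega)
    rw [coeff_add, sub_mul, one_mul, coeff_sub] at this
    cases m with
    | zero =>
      simp at this ⊢
      linarith
    | succ m =>
      rw [coeff_X_mul] at this
      rw [if_neg (by omega), if_pos ⟨by omega, hm⟩]
      simp only [Nat.add_sub_cancel]
      linarith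

lemma catalan_mul_choose {n k : ℕ} (hk : k ≤ n / 2) :
    ((catalan (n - k) * (n - k).choose k : ℕ) : ℚ) =
      (1 : ℚ) / ((n - k + 1 : ℕ) : ℚ) * (n.choose k : ℚ) * (((2 * n - 2 * k).choose n : ℕ) : ℚ) := by
  obtain ⟨m, rfl⟩ : ∃ m, n = m + 2 * k := ⟨n - 2 * k, by omega⟩
  have hcat := succ_mul_catalan_eq_centralBinom (m + k)
  rw [Nat.centralBinom_eq_two_mul_choose] at hcat
  rw [show m + 2 * k - k = m + k by omega,
    show 2 * (m + 2 * k) - 2 * k = 2 * (m + k) by omega]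
  have hq : ((m + k : ℕ) + 1 : ℚ) * catalan (m + k) = ((2 * (m + k)).choose (m + k) : ℕ) := by
    exact_mod_cast hcat
  have hne : ((m + k : ℕ) + 1 : ℚ) ≠ 0 := by positivity
  have hc : (catalan (m + k) : ℚ) = ((2 * (m + k)).choose (m + k) : ℕ) / ((m + k : ℕ) + 1 : ℚ) := by
    rw [eq_div_iff hne, mul_comm]; exact hq
  rw [Nat.cast_mul, hc, Nat.cast_choose ℚ (show m + k ≤ 2 * (m + k) by omega),
    Nat.cast_choose ℚ (show k ≤ m + k by omega), Nat.cast_choose ℚ (show k ≤ m + 2 * k by omega),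
    Nat.cast_choose ℚ (show m + 2 * k ≤ 2 * (m + k) by omega),
    show 2 * (m + k) - (m + k) = m + k by omega, show m + k - k = m by omega,
    show m + 2 * k - k = m + k by omega, show 2 * (m + k) - (m + 2 * k) = m by omega]
  have h (j : ℕ) : (j.factorial : ℚ) ≠ 0 := by exact_mod_cast j.factorial_ne_zero
  have h1 := h (m + k)
  have h2 := h m
  have h3 := h k
  have h4 := h (m + 2 * k)
  push_cast at hne ⊢
  field_simp

end Truncation

/-- (Gessel.)  For the unit cube `C_n = [0,1]^n ⊂ ℝ^n` with Stanley
`f`- and `g`-polynomials `(f_F)`, `(g_F)` of its faces,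
`g_{C_n}(x) = ∑_{k=0}^{⌊n/2⌋} (1/(n-k+1)) binom(n,k) binom(2n-2k,n) (x-1)^k` in `ℚ[x]`. -/
theorem stmt12 (n : ℕ) (P : Set (Fin n → ℝ))
    (hP : P = Set.Icc (0 : Fin n → ℝ) 1)
    (hfin : {F : Set (Fin n → ℝ) | IsFaceOf P F}.Finite)
    (f g : Set (Fin n → ℝ) → Polynomial ℚ)
    (hf : ∀ F, IsFaceOf P F →
      f F = (Polynomial.X - 1) ^ faceDim F +
        ∑ E ∈ hfin.toFinset.filter (fun E => E ⊂ F),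
          g E * (Polynomial.X - 1) ^ (faceDim F - 1 - faceDim E))
    (hg : ∀ F, IsFaceOf P F →
      g F = Polynomial.C ((f F).coeff 0) +
        ∑ l ∈ Finset.Icc 1 (faceDim F / 2),
          Polynomial.C ((f F).coeff l - (f F).coeff (l - 1)) * Polynomial.X ^ l) :
    g P = ∑ k ∈ Finset.range (n / 2 + 1),
      Polynomial.C ((1 : ℚ) / ((n - k + 1 : ℕ) : ℚ) * (n.choose k : ℚ) *
          (((2 * n - 2 * k).choose n : ℕ) : ℚ)) *
        (Polynomial.X - 1) ^ k := by
  subst hP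
  have hface : ∀ σ : Fin n → SignType, IsFaceOf (Set.Icc 0 1) (cubeFace σ) := fun σ =>
    (isFaceOf_cube_iff _).2 ⟨σ, rfl⟩
  have key : ∀ k, ∀ σ : Fin n → SignType, zeros σ = k →
      g (cubeFace σ) = cubePoly (Polynomial.X - 1) k := by
    intro k
    induction k using Nat.strong_induction_on with
    | _ k ih =>
    intro σ hσ
    rw [hg _ (hface σ), faceDim_cubeFace, hσ]
    apply cubePoly_eq_truncation
    have hset : hfin.toFinset.filter (fun E => E ⊂ cubeFace σ) =
        ((Finset.univ.filter fun τ : Fin n → SignType => ∀ i, σ i = 0 ∨ τ i = σ i).erase σ).map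
          ⟨cubeFace, cubeFace_injective⟩ := by
      ext E
      simp only [Finset.mem_filter, Set.Finite.mem_toFinset, Set.mem_ofPred_eq, isFaceOf_cube_iff,
        Finset.mem_map, Finset.mem_erase, Finset.mem_univ, true_and, Function.Embedding.coeFn_mk,
        ← cubeFace_subset_iff]
      constructor
      · rintro ⟨⟨τ, rfl⟩, h⟩
        exact ⟨τ, ⟨fun e => h.ne (by rw [e]), h.subset⟩, rfl⟩
      · rintro ⟨τ, ⟨hne, hsub⟩, rfl⟩
        exact ⟨⟨τ, rfl⟩, hsub.ssubset_of_ne fun e => hne (cubeFace_injective e)⟩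
    rw [hf _ (hface σ), faceDim_cubeFace, hset, Finset.sum_map, hσ]
    have hsum := sum_subfaces σ fun d => cubePoly (Polynomial.X - 1 : ℚ[X]) d *
      (Polynomial.X - 1) ^ (k - d)
    rw [hσ] at hsum
    rw [← hsum, ← Finset.add_sum_erase _ _ (show σ ∈ Finset.univ.filter
      (fun τ : Fin n → SignType => ∀ i, σ i = 0 ∨ τ i = σ i) by simp), hσ, Nat.sub_self, pow_zero,
      mul_one, mul_add, Finset.mul_sum, ← pow_succ']
    have hterm : ∀ τ ∈ (Finset.univ.filter
        (fun τ : Fin n → SignType => ∀ i, σ i = 0 ∨ τ i = σ i)).erase σ,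
        (Polynomial.X - 1) * (g (cubeFace τ) *
          (Polynomial.X - 1) ^ (k - 1 - faceDim (cubeFace τ))) =
        cubePoly (Polynomial.X - 1) (zeros τ) * (Polynomial.X - 1) ^ (k - zeros τ) := by
      intro τ hτ
      rw [Finset.mem_erase, Finset.mem_filter, ← cubeFace_subset_iff] at hτ
      have hlt : zeros τ < k := hσ ▸ zeros_lt
        (hτ.2.2.ssubset_of_ne fun e => hτ.1 (cubeFace_injective e))
      rw [ih _ hlt τ rfl, faceDim_cubeFace, show k - zeros τ = k - 1 - zeros τ + 1 by omega]
      ring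
    simp only [Function.Embedding.coeFn_mk]
    rw [Finset.sum_congr rfl hterm]
    ring
  have hz : zeros (0 : Fin n → SignType) = n := by simp [zeros]
  rw [← cubeFace_zero, key n 0 hz, cubePoly_eq_sum_half]
  refine Finset.sum_congr rfl fun k hk => ?_
  rw [← catalan_mul_choose (by simpa [Nat.lt_succ_iff] using hk), Polynomial.C_eq_natCast]
end
end

section
/- (Brion–Vergne) Let P ⊂ ℝ^n be a full-dimensional simple lattice polytope with the vertex data u_F, m_v^F described in the context. Let z ∈ ℂ^n be such that ⟨m_v^F, z⟩ ≠ 0 for every vertex v of P and every F ∈ 𝓕^v. Then ∫_P exp(⟨x,z⟩) dx = (−1)^n · Σ_{v vertex of P} exp(⟨v,z⟩) · |det((m_v^F)_{F ∈ 𝓕^v})| · Π_{F ∈ 𝓕^v} 1/⟨m_v^F, z⟩, where the integral is with respect to Lebesgue measure on ℝ^n. -/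
/-!
The proof integrates the flipped-cone decomposition of Lawrence and Varchenko. Let `ξ` be a direction
that is orthogonal to no dual vector `m_v^F`. Reversing, in the tangent cone at each vertex `v`, the
edge directions `m_v^F` with `⟨m_v^F, ξ⟩ > 0`, with one factor `-1` for each, gives
`1_P(x) = ∑_v ∏_{F ∋ v} (1[ℓ_F(x) ≥ 0] - H(⟨m_v^F, ξ⟩))`,
where `ℓ_F` is the affine function of the facet `F` and `H` the Heaviside function
(`SimplePoly.coneSum_eq`).

The right-hand side does not depend on `ξ` (`SimplePoly.coneSum_eventually`,
`SimplePoly.coneSum_move`): when `ξ` crosses the hyperplane orthogonal to an edge, only the two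
endpoints of that edge change their contributions, and since these endpoints share all facets but
one each (`SimplePoly.nbr_data`), the two changes cancel. For `x ∈ P` only the vertex maximizing `ξ`
contributes, and it contributes `1`. For `x ∉ P` one moves `ξ` to a functional strictly separating
`x` from `P`, for which all contributions vanish.

If `Re z` is generic, take `ξ = Re z`: then `exp ⟨x, z⟩` is integrable over every flipped cone, and in
the coordinates given by the `m_v^F` its integral is a product of half-line integrals, each equal to
`-1 / ⟨m_v^F, z⟩` (`cone_integral`). The general case follows by letting generic points tend to `z`,
both sides being continuous where all `⟨m_v^F, z⟩` are nonzero (`SimplePoly.integral_eq`).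
-/

open scoped Pointwise Classical
open MeasureTheory Polynomial

noncomputable section

/-- The pairing `⟨x, z⟩ = ∑ i, x i * z i` of a real vector with a complex vector,
extended complex-bilinearly. -/
def cpair {n : ℕ} (x : Fin n → ℝ) (z : Fin n → ℂ) : ℂ := ∑ i, (x i : ℂ) * z i

/-- `U(σ_v)`: the subgroup of `ℤ^n` generated by the primitive normals `u_F` of the
facets `F ∈ 𝓕^v` containing the vertex `v = x` (enumerated by `Fv x : Fin n → _`). -/
def normalLattice {n : ℕ} (u : Set (Fin n → ℝ) → (Fin n → ℤ))
    (Fv : (Fin n → ℝ) → Fin n → Set (Fin n → ℝ)) (x : Fin n → ℝ) :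
    Submodule ℤ (Fin n → ℤ) :=
  Submodule.span ℤ (Set.range fun j => u (Fv x j))

/-- The character value `χ_γ(m_v^F) = exp(2πi ⟨m_v^F, γ̃⟩)` for
`γ ∈ G(σ_v) = ℤ^n / U(σ_v)`, computed using a representative `γ̃` of `γ`. -/
noncomputable def chi {n : ℕ} (u : Set (Fin n → ℝ) → (Fin n → ℤ))
    (Fv : (Fin n → ℝ) → Fin n → Set (Fin n → ℝ))
    (m : (Fin n → ℝ) → Fin n → (Fin n → ℝ)) (x : Fin n → ℝ)
    (γ : (Fin n → ℤ) ⧸ normalLattice u Fv x) (j : Fin n) : ℂ :=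
  Complex.exp (2 * Real.pi * Complex.I *
    ∑ i, (m x j i : ℂ) * ((Quotient.out γ) i : ℂ))


/-! ### Simple polytopes presented by inequalities -/

/-- A simple polytope in `ℝ^n`, presented by finitely many inequalities
`0 ≤ ⟨x, U K⟩ + lam K`.  `V` is the set of vertices (points that are the unique maximizer of some
linear functional), `T v` the set of the `n` inequalities tight at `v`, and `(M v K)_{K ∈ T v}` the
basis dual to `(U K)_{K ∈ T v}`. -/
structure SimplePoly (n : ℕ) (ι : Type) where
  P : Set (Fin n → ℝ)
  facets : Finset ι
  U : ι → Fin n → ℝ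
  lam : ι → ℝ
  V : Finset (Fin n → ℝ)
  T : (Fin n → ℝ) → Finset ι
  M : (Fin n → ℝ) → ι → (Fin n → ℝ)
  compact : IsCompact P
  nonempty : P.Nonempty
  mem_P : ∀ x, x ∈ P ↔ ∀ K ∈ facets, 0 ≤ x ⬝ᵥ U K + lam K
  mem_V : ∀ v, v ∈ V ↔ v ∈ P ∧ ∃ c : Fin n → ℝ, ∀ p ∈ P, p ≠ v → p ⬝ᵥ c < v ⬝ᵥ c
  mem_T : ∀ v ∈ V, ∀ K, K ∈ T v ↔ K ∈ facets ∧ v ⬝ᵥ U K + lam K = 0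
  card_T : ∀ v ∈ V, (T v).card = n
  dual : ∀ v ∈ V, ∀ K ∈ T v, ∀ K' ∈ T v, M v K ⬝ᵥ U K' = if K = K' then 1 else 0
  expand : ∀ v ∈ V, ∀ y, y = ∑ K ∈ T v, (y ⬝ᵥ U K) • M v K

namespace SimplePoly

variable {n : ℕ} {ι : Type} (D : SimplePoly n ι)

lemma M_ne_zero {v : Fin n → ℝ} (hv : v ∈ D.V) {K : ι} (hK : K ∈ D.T v) : D.M v K ≠ 0 := by
  intro h
  have := D.dual v hv K hK K hK
  simp [h] at this

lemma vertex_mem {v : Fin n → ℝ} (hv : v ∈ D.V) : v ∈ D.P := ((D.mem_V v).1 hv).1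

lemma expand_sub {v : Fin n → ℝ} (hv : v ∈ D.V) (p : Fin n → ℝ) :
    p - v = ∑ K ∈ D.T v, (p ⬝ᵥ D.U K + D.lam K) • D.M v K := by
  conv_lhs => rw [D.expand v hv (p - v)]
  refine Finset.sum_congr rfl fun K hK => ?_
  have := ((D.mem_T v hv K).1 hK).2
  rw [sub_dotProduct]
  congr 1
  linarith

lemma expand_single {v : Fin n → ℝ} (hv : v ∈ D.V) {K : ι} (hK : K ∈ D.T v) (y : Fin n → ℝ)
    (hy : ∀ K' ∈ (D.T v).erase K, y ⬝ᵥ D.U K' = 0) : y = (y ⬝ᵥ D.U K) • D.M v K := by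
  conv_lhs => rw [D.expand v hv y]
  rw [← Finset.add_sum_erase _ _ hK, Finset.sum_eq_zero, add_zero]
  intro K' hK'
  rw [hy K' hK', zero_smul]

/-- A point of `P` at which all inequalities of `T v` except `K` are tight, together with one more
inequality `G` transversal to the edge direction `M v K`, is a vertex: the sum of the corresponding
inner normals attains its minimum there and nowhere else. -/
lemma vertex_of_tight {v : Fin n → ℝ} (hv : v ∈ D.V) {K G : ι} (hK : K ∈ D.T v)
    {w : Fin n → ℝ} (hw : w ∈ D.P)
    (ht : ∀ K' ∈ (D.T v).erase K, w ⬝ᵥ D.U K' + D.lam K' = 0)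
    (hG : G ∈ D.facets) (hGw : w ⬝ᵥ D.U G + D.lam G = 0) (hMG : D.M v K ⬝ᵥ D.U G ≠ 0) :
    w ∈ D.V := by
  rw [D.mem_V]
  refine ⟨hw, -(∑ K' ∈ (D.T v).erase K, D.U K' + D.U G), fun p hp hpw => ?_⟩
  have hp' := (D.mem_P p).1 hp
  have h1 : ∀ K' ∈ (D.T v).erase K, 0 ≤ (p - w) ⬝ᵥ D.U K' := fun K' hK' => by
    have := hp' K' ((D.mem_T v hv K').1 (Finset.mem_of_mem_erase hK')).1
    have := ht K' hK'
    rw [sub_dotProduct]; linarith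
  have h2 : 0 ≤ (p - w) ⬝ᵥ D.U G := by
    have := hp' G hG
    rw [sub_dotProduct]; linarith
  have h3 : 0 ≤ ∑ K' ∈ (D.T v).erase K, (p - w) ⬝ᵥ D.U K' := Finset.sum_nonneg h1
  have key : (p - w) ⬝ᵥ (∑ K' ∈ (D.T v).erase K, D.U K' + D.U G)
      = ∑ K' ∈ (D.T v).erase K, (p - w) ⬝ᵥ D.U K' + (p - w) ⬝ᵥ D.U G := by
    rw [dotProduct_add, dotProduct_sum]
  suffices 0 < (p - w) ⬝ᵥ (∑ K' ∈ (D.T v).erase K, D.U K' + D.U G) by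
    rw [sub_dotProduct] at this
    rw [dotProduct_neg, dotProduct_neg]; linarith
  rw [key]
  refine lt_of_le_of_ne (by linarith) fun h0 => hpw ?_
  have h4 : ∑ K' ∈ (D.T v).erase K, (p - w) ⬝ᵥ D.U K' = 0 := by linarith
  have h5 : (p - w) ⬝ᵥ D.U G = 0 := by linarith
  have h6 := (Finset.sum_eq_zero_iff_of_nonneg h1).1 h4
  have h7 := D.expand_single hv hK (p - w) h6
  have h8 : (p - w) ⬝ᵥ D.U K = 0 := by
    rw [h7, smul_dotProduct, smul_eq_mul] at h5
    exact (mul_eq_zero.1 h5).resolve_right hMG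
  rw [h8, zero_smul] at h7
  exact sub_eq_zero.1 h7

/-! ### The edge graph -/

/-- `w` is the other endpoint of the edge leaving the vertex `v` in direction `M v K`. -/
def Nbr (v : Fin n → ℝ) (K : ι) (w : Fin n → ℝ) : Prop :=
  v ∈ D.V ∧ K ∈ D.T v ∧ w ∈ D.V ∧ ∃ s : ℝ, 0 < s ∧ w = v + s • D.M v K

/-- Every edge direction at a vertex leads to a neighbouring vertex, found by the ratio test of the
simplex algorithm. -/
lemma exists_nbr {v : Fin n → ℝ} (hv : v ∈ D.V) {K : ι} (hK : K ∈ D.T v) :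
    ∃ w, D.Nbr v K w := by
  have hvP := (D.mem_P v).1 (D.vertex_mem hv)
  have hl : ∀ (s : ℝ) (H : ι), (v + s • D.M v K) ⬝ᵥ D.U H + D.lam H
      = (v ⬝ᵥ D.U H + D.lam H) + s * (D.M v K ⬝ᵥ D.U H) := by
    intro s H
    rw [add_dotProduct, smul_dotProduct, smul_eq_mul]; ring
  set B := D.facets.filter fun G => D.M v K ⬝ᵥ D.U G < 0 with hB
  have hBne : B.Nonempty := by
    by_contra hne
    rw [Finset.not_nonempty_iff_eq_empty] at hne
    have hpos : ∀ G ∈ D.facets, 0 ≤ D.M v K ⬝ᵥ D.U G := by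
      intro G hG
      by_contra hlt
      have : G ∈ B := by rw [hB, Finset.mem_filter]; exact ⟨hG, not_le.1 hlt⟩
      simp [hne] at this
    have hc : Continuous fun x : Fin n → ℝ => x ⬝ᵥ D.M v K := by
      unfold dotProduct; fun_prop
    obtain ⟨b, hb⟩ := (D.compact.image hc).bddAbove
    have hMM : 0 < D.M v K ⬝ᵥ D.M v K := by
      refine lt_of_le_of_ne (Finset.sum_nonneg fun i _ => mul_self_nonneg _) fun h => ?_
      exact D.M_ne_zero hv hK (dotProduct_self_eq_zero.1 h.symm)
    set s := (|b - v ⬝ᵥ D.M v K| + 1) / (D.M v K ⬝ᵥ D.M v K) with hs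
    have hs0 : 0 ≤ s := by positivity
    have hmem : v + s • D.M v K ∈ D.P := by
      rw [D.mem_P]
      intro G hG
      rw [hl]
      have := hvP G hG
      have := mul_nonneg hs0 (hpos G hG)
      linarith
    have h1 := hb ⟨_, hmem, rfl⟩
    simp only [add_dotProduct, smul_dotProduct, smul_eq_mul] at h1
    rw [hs, div_mul_cancel₀ _ hMM.ne'] at h1
    have := le_abs_self (b - v ⬝ᵥ D.M v K)
    linarith
  obtain ⟨G, hGB, hmin⟩ := Finset.exists_min_image B
    (fun G => (v ⬝ᵥ D.U G + D.lam G) / (-(D.M v K ⬝ᵥ D.U G))) hBne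
  rw [hB, Finset.mem_filter] at hGB
  obtain ⟨hG, hneg⟩ := hGB
  set s := (v ⬝ᵥ D.U G + D.lam G) / (-(D.M v K ⬝ᵥ D.U G)) with hs
  have hGT : G ∉ D.T v := by
    intro h
    rw [D.dual v hv K hK G h] at hneg
    split_ifs at hneg <;> linarith
  have hGpos : 0 < v ⬝ᵥ D.U G + D.lam G := by
    refine lt_of_le_of_ne (hvP G hG) fun h => hGT ?_
    rw [D.mem_T v hv]; exact ⟨hG, h.symm⟩
  have hs0 : 0 < s := div_pos hGpos (by linarith)
  refine ⟨v + s • D.M v K, hv, hK, ?_, s, hs0, rfl⟩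
  refine D.vertex_of_tight hv hK ?_ ?_ hG ?_ hneg.ne
  · rw [D.mem_P]
    intro H hH
    rw [hl]
    by_cases hHn : D.M v K ⬝ᵥ D.U H < 0
    · have := hmin H (by rw [hB, Finset.mem_filter]; exact ⟨hH, hHn⟩)
      rw [le_div_iff₀ (by linarith)] at this
      linarith
    · have := hvP H hH
      have := mul_nonneg hs0.le (not_lt.1 hHn)
      linarith
  · intro K' hK'
    rw [Finset.mem_erase] at hK'
    rw [hl, ((D.mem_T v hv K').1 hK'.2).2, D.dual v hv K hK K' hK'.2, if_neg (Ne.symm hK'.1)]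
    ring
  · rw [hl, hs, div_neg, neg_mul, div_mul_cancel₀ _ hneg.ne]
    ring

/-- A point strictly between two points of `P` is not a vertex, so an edge has only one other
endpoint. -/
lemma nbr_unique {v w₁ w₂ : Fin n → ℝ} {K : ι} (h₁ : D.Nbr v K w₁) (h₂ : D.Nbr v K w₂) :
    w₁ = w₂ := by
  obtain ⟨hv, hK, hw₁, s₁, hs₁, e₁⟩ := h₁
  obtain ⟨-, -, hw₂, s₂, hs₂, e₂⟩ := h₂
  have main : ∀ (a b : ℝ), 0 < a → a < b → v + a • D.M v K ∈ D.V → v + b • D.M v K ∈ D.V →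
      False := by
    intro a b ha hab hA hB
    obtain ⟨-, c, hc⟩ := (D.mem_V _).1 hA
    have hM := D.M_ne_zero hv hK
    have h1 := hc v (D.vertex_mem hv) (by
      intro h
      have : a • D.M v K = 0 := by simpa using h.symm
      exact (smul_ne_zero ha.ne' hM) this)
    have h2 := hc _ (D.vertex_mem hB) (by
      intro h
      have h' : (b - a) • D.M v K = 0 := by
        rw [sub_smul, sub_eq_zero]; exact add_left_cancel h
      exact (smul_ne_zero (sub_pos.2 hab).ne' hM) h')
    simp only [add_dotProduct, smul_dotProduct, smul_eq_mul] at h1 h2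
    have h3 : 0 < D.M v K ⬝ᵥ c := by
      by_contra h
      have := mul_nonneg ha.le (neg_nonneg.2 (not_lt.1 h))
      linarith
    have := mul_lt_mul_of_pos_right hab h3
    linarith
  rcases lt_trichotomy s₁ s₂ with h | h | h
  · exact (main s₁ s₂ hs₁ h (e₁ ▸ hw₁) (e₂ ▸ hw₂)).elim
  · rw [e₁, e₂, h]
  · exact (main s₂ s₁ hs₂ h (e₂ ▸ hw₂) (e₁ ▸ hw₁)).elim

/-- Comparison of the vertex data at the two ends `v`, `w` of an edge.  Exactly one tight inequality
is exchanged (`K` for `G`), the edge directions along the edge are opposite, and the remaining dual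
vectors differ by multiples of the edge direction. -/
lemma nbr_data {v w : Fin n → ℝ} {K : ι} (h : D.Nbr v K w) :
    ∃ G ∈ D.T w, (D.T w).erase G = (D.T v).erase K ∧ D.Nbr w G v ∧
      (∃ c : ℝ, c < 0 ∧ D.M w G = c • D.M v K) ∧
      ∀ K' ∈ (D.T v).erase K, ∃ d : ℝ, D.M w K' = D.M v K' + d • D.M v K := by
  obtain ⟨hv, hK, hw, s, hs, rfl⟩ := h
  set w := v + s • D.M v K with hwdef
  have hl : ∀ H ∈ D.T v, w ⬝ᵥ D.U H + D.lam H = s * (if K = H then 1 else 0) := by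
    intro H hH
    rw [← D.dual v hv K hK H hH, hwdef, add_dotProduct, smul_dotProduct, smul_eq_mul]
    linarith [((D.mem_T v hv H).1 hH).2]
  have hsub : (D.T v).erase K ⊆ D.T w := by
    intro H hH
    rw [Finset.mem_erase] at hH
    rw [D.mem_T w hw]
    refine ⟨((D.mem_T v hv H).1 hH.2).1, ?_⟩
    rw [hl H hH.2, if_neg (Ne.symm hH.1), mul_zero]
  have hKw : K ∉ D.T w := by
    intro h
    have := ((D.mem_T w hw K).1 h).2
    rw [hl K hK] at this
    simp at this
    exact hs.ne' this
  obtain ⟨G, hGn, hins⟩ := Finset.exists_eq_insert_iff.2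
    (⟨hsub, by rw [Finset.card_erase_add_one hK, D.card_T v hv, D.card_T w hw]⟩ :
      (D.T v).erase K ⊆ D.T w ∧ ((D.T v).erase K).card + 1 = (D.T w).card)
  have hGw : G ∈ D.T w := by rw [← hins]; exact Finset.mem_insert_self _ _
  have her : (D.T w).erase G = (D.T v).erase K := by rw [← hins, Finset.erase_insert hGn]
  have hM1 : D.M w G = (D.M w G ⬝ᵥ D.U K) • D.M v K := by
    refine D.expand_single hv hK _ fun K' hK' => ?_
    rw [D.dual w hw G hGw K' (hsub hK'), if_neg]
    rintro rfl
    exact hGn hK'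
  have hM2 : v - w = ((v - w) ⬝ᵥ D.U G) • D.M w G := by
    refine D.expand_single hw hGw _ fun K' hK' => ?_
    rw [her] at hK'
    have a1 := ((D.mem_T v hv K').1 (Finset.mem_of_mem_erase hK')).2
    have a2 := ((D.mem_T w hw K').1 (hsub hK')).2
    rw [sub_dotProduct]; linarith
  have hg0 : 0 ≤ (v - w) ⬝ᵥ D.U G := by
    have a1 := (D.mem_T w hw G).1 hGw
    have a2 := (D.mem_P v).1 (D.vertex_mem hv) G a1.1
    rw [sub_dotProduct]; linarith [a1.2]
  set g := (v - w) ⬝ᵥ D.U G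
  set c := D.M w G ⬝ᵥ D.U K
  have hgc : g * c = -s := by
    have e1 : v - w = (-s) • D.M v K := by rw [hwdef, neg_smul]; abel
    rw [e1, hM1, smul_smul] at hM2
    exact (smul_left_injective ℝ (D.M_ne_zero hv hK) hM2).symm
  have hgpos : 0 < g := by
    refine lt_of_le_of_ne hg0 fun h => ?_
    rw [← h] at hgc; linarith
  have hc : c < 0 := by
    by_contra h
    have := mul_nonneg hg0 (not_lt.1 h)
    linarith
  refine ⟨G, hGw, her, ⟨hw, hGw, hv, g, hgpos, ?_⟩, ⟨c, hc, hM1⟩, fun K' hK' => ?_⟩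
  · rw [← hM2]; abel
  · refine ⟨D.M w K' ⬝ᵥ D.U K, ?_⟩
    have hK'' := Finset.mem_erase.1 hK'
    have : D.M w K' - D.M v K' = ((D.M w K' - D.M v K') ⬝ᵥ D.U K) • D.M v K := by
      refine D.expand_single hv hK _ fun H hH => ?_
      rw [sub_dotProduct, D.dual w hw K' (hsub hK') H (hsub hH),
        D.dual v hv K' hK''.2 H (Finset.mem_of_mem_erase hH), sub_self]
    rw [sub_dotProduct, D.dual v hv K' hK''.2 K hK, if_neg hK''.1, sub_zero] at this
    rw [← this]; abel

end SimplePoly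

/-! ### The flipped-cone decomposition of the indicator function -/

/-- The Heaviside function, with the symmetric value `1/2` at `0`, so that
`heavi s + heavi (-s) = 1` for every `s`. -/
def heavi (s : ℝ) : ℝ := if s < 0 then 0 else if s = 0 then 1 / 2 else 1

lemma heavi_of_neg {s : ℝ} (h : s < 0) : heavi s = 0 := by simp [heavi, h]

lemma heavi_of_pos {s : ℝ} (h : 0 < s) : heavi s = 1 := by simp [heavi, h.not_gt, h.ne']

lemma heavi_neg_mul {c : ℝ} (hc : c < 0) (s : ℝ) : heavi (c * s) = 1 - heavi s := by
  rcases lt_trichotomy s 0 with h | h | h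
  · rw [heavi_of_neg h, heavi_of_pos (mul_pos_of_neg_of_neg hc h)]; ring
  · subst h; simp [heavi]; norm_num
  · rw [heavi_of_pos h, heavi_of_neg (mul_neg_of_neg_of_pos hc h)]; ring

lemma heavi_eventually {s : ℝ} (h : s ≠ 0) : ∀ᶠ t in nhds s, heavi t = heavi s := by
  rcases lt_or_gt_of_ne h with h | h
  · filter_upwards [Iio_mem_nhds h] with t ht
    rw [heavi_of_neg h, heavi_of_neg ht]
  · filter_upwards [Ioi_mem_nhds h] with t ht
    rw [heavi_of_pos h, heavi_of_pos ht]

lemma exists_generic {n : ℕ} (W : Finset (Fin n → ℝ)) (hW : ∀ w ∈ W, w ≠ 0) :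
    ∃ g : Fin n → ℝ, ∀ w ∈ W, w ⬝ᵥ g ≠ 0 := by
  obtain ⟨f, hf⟩ := Module.exists_dual_forall_apply_ne_zero (K := ℝ)
    (fun w : W => (w : Fin n → ℝ)) (fun w => hW w w.2)
  refine ⟨fun i => f fun j => if i = j then 1 else 0, fun w hw => ?_⟩
  have h := hf ⟨w, hw⟩
  rw [LinearMap.pi_apply_eq_sum_univ f] at h
  simpa [dotProduct] using h

lemma generic_eventually {n : ℕ} (W : Finset (Fin n → ℝ)) (g a : Fin n → ℝ)
    (hg : ∀ w ∈ W, w ⬝ᵥ g ≠ 0) :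
    ∀ᶠ t : ℝ in nhdsWithin 0 {0}ᶜ, ∀ w ∈ W, w ⬝ᵥ (a + t • g) ≠ 0 := by
  rw [Filter.eventually_all_finset]
  intro w hw
  by_cases h : w ⬝ᵥ a = 0
  · filter_upwards [self_mem_nhdsWithin] with t ht
    rw [dotProduct_add, h, dotProduct_smul, zero_add]
    exact mul_ne_zero ht (hg w hw)
  · have hc : Continuous fun t : ℝ => w ⬝ᵥ (a + t • g) := by unfold dotProduct; fun_prop
    exact nhdsWithin_le_nhds (hc.continuousAt.eventually_ne (by simpa using h))

namespace SimplePoly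

variable {n : ℕ} {ι : Type} (D : SimplePoly n ι)

/-- The `0/1` indicator of the half-space of the inequality `K`. -/
def ind (x : Fin n → ℝ) (K : ι) : ℝ := if 0 ≤ x ⬝ᵥ D.U K + D.lam K then 1 else 0

/-- The contribution of the vertex `v` to the flipped-cone sum: for generic `ξ`, it is `± 1` on the
tangent cone at `v` with all edge directions on which `ξ` is positive reversed, and `0`
elsewhere. -/
def term (x ξ v : Fin n → ℝ) : ℝ := ∏ K ∈ D.T v, (D.ind x K - heavi (D.M v K ⬝ᵥ ξ))

/-- The flipped-cone sum in direction `ξ`, evaluated at `x`. -/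
def coneSum (x ξ : Fin n → ℝ) : ℝ := ∑ v ∈ D.V, D.term x ξ v

/-- Along a wall `⟨M v K, ξ⟩ = 0` the contributions of the two ends of an edge change by opposite
amounts.  Hence the flipped-cone sum is locally constant in `ξ` as long as at each vertex at most
one edge direction is orthogonal to `ξ`. -/
lemma coneSum_eventually (x ξ₀ : Fin n → ℝ)
    (h1 : ∀ v ∈ D.V, ∀ K ∈ D.T v, ∀ K' ∈ D.T v, D.M v K ⬝ᵥ ξ₀ = 0 → D.M v K' ⬝ᵥ ξ₀ = 0 → K = K') :
    ∀ᶠ ξ in nhds ξ₀, D.coneSum x ξ = D.coneSum x ξ₀ := by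
  have hev : ∀ᶠ ξ in nhds ξ₀, ∀ v ∈ D.V, ∀ K ∈ D.T v, D.M v K ⬝ᵥ ξ₀ ≠ 0 →
      heavi (D.M v K ⬝ᵥ ξ) = heavi (D.M v K ⬝ᵥ ξ₀) := by
    rw [Filter.eventually_all_finset]
    intro v hv
    rw [Filter.eventually_all_finset]
    intro K hK
    by_cases h : D.M v K ⬝ᵥ ξ₀ = 0
    · exact Filter.Eventually.of_forall fun ξ h' => (h' h).elim
    · have hc : Continuous fun ξ : Fin n → ℝ => D.M v K ⬝ᵥ ξ := by unfold dotProduct; fun_prop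
      filter_upwards [hc.continuousAt.eventually (heavi_eventually h)] with ξ hξ _ using hξ
  filter_upwards [hev] with ξ hξ
  rw [← sub_eq_zero, coneSum, coneSum, ← Finset.sum_sub_distrib]
  -- only vertices with an edge direction orthogonal to `ξ₀` contribute
  set B := D.V.filter fun v => ∃ K ∈ D.T v, D.M v K ⬝ᵥ ξ₀ = 0 with hB
  have hzero : ∀ v ∈ D.V, v ∉ B → D.term x ξ v - D.term x ξ₀ v = 0 := by
    intro v hv hvB
    rw [sub_eq_zero]
    refine Finset.prod_congr rfl fun K hK => ?_
    rw [hξ v hv K hK]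
    intro h
    exact hvB (by rw [hB, Finset.mem_filter]; exact ⟨hv, K, hK, h⟩)
  rw [← Finset.sum_subset (Finset.filter_subset _ _ : B ⊆ D.V) hzero]
  have hBV : ∀ v ∈ B, v ∈ D.V ∧ ∃ K ∈ D.T v, D.M v K ⬝ᵥ ξ₀ = 0 := fun v hv => by
    rwa [hB, Finset.mem_filter] at hv
  -- the other end of the edge orthogonal to `ξ₀`
  have hex : ∀ v ∈ B, ∃ K w, D.M v K ⬝ᵥ ξ₀ = 0 ∧ D.Nbr v K w := by
    intro v hv
    obtain ⟨hvV, K, hK, h⟩ := hBV v hv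
    obtain ⟨w, hw⟩ := D.exists_nbr hvV hK
    exact ⟨K, w, h, hw⟩
  rcases B.eq_empty_or_nonempty with hBe | ⟨v₀, hv₀⟩
  · rw [← hB, hBe, Finset.sum_empty]
  have : Nonempty ι := ⟨(hBV v₀ hv₀).2.choose⟩
  choose! Kz g hKz hg using hex
  have hgB : ∀ v ∈ B, g v ∈ B := by
    intro v hv
    obtain ⟨G, hG, -, -, ⟨c, -, hc⟩, -⟩ := D.nbr_data (hg v hv)
    rw [hB, Finset.mem_filter]
    refine ⟨(hg v hv).2.2.1, G, hG, ?_⟩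
    rw [hc, smul_dotProduct, hKz v hv, smul_zero]
  refine Finset.sum_involution (fun v _ => g v) ?_ ?_ hgB ?_
  · intro v hv
    obtain ⟨G, hG, her, hN, ⟨c, hcneg, hc⟩, hd⟩ := D.nbr_data (hg v hv)
    have hvV := (hBV v hv).1
    have hK := (hg v hv).2.1
    have hwV := (hg v hv).2.2.1
    have e1 : ∀ K' ∈ (D.T v).erase (Kz v), D.M v K' ⬝ᵥ ξ₀ ≠ 0 := fun K' hK' h0 => by
      rw [Finset.mem_erase] at hK'
      exact hK'.1 (h1 v hvV K' hK'.2 _ hK h0 (hKz v hv))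
    have e2 : ∀ K' ∈ (D.T v).erase (Kz v), D.M (g v) K' ⬝ᵥ ξ₀ = D.M v K' ⬝ᵥ ξ₀ := by
      intro K' hK'
      obtain ⟨d, hd⟩ := hd K' hK'
      rw [hd, add_dotProduct, smul_dotProduct, hKz v hv, smul_zero, add_zero]
    set Q := ∏ K' ∈ (D.T v).erase (Kz v), (D.ind x K' - heavi (D.M v K' ⬝ᵥ ξ₀)) with hQ
    have t0 : D.term x ξ₀ v = (D.ind x (Kz v) - heavi (D.M v (Kz v) ⬝ᵥ ξ₀)) * Q := by
      rw [term, ← Finset.mul_prod_erase _ _ hK]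
    have t1 : D.term x ξ v = (D.ind x (Kz v) - heavi (D.M v (Kz v) ⬝ᵥ ξ)) * Q := by
      rw [term, ← Finset.mul_prod_erase _ _ hK, hQ]
      congr 1
      refine Finset.prod_congr rfl fun K' hK' => ?_
      rw [hξ v hvV K' (Finset.mem_of_mem_erase hK') (e1 K' hK')]
    have t2 : D.term x ξ₀ (g v) = (D.ind x G - heavi (D.M (g v) G ⬝ᵥ ξ₀)) * Q := by
      rw [term, ← Finset.mul_prod_erase _ _ hG, her, hQ]
      congr 1
      refine Finset.prod_congr rfl fun K' hK' => ?_
      rw [e2 K' hK']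
    have t3 : D.term x ξ (g v) = (D.ind x G - heavi (D.M (g v) G ⬝ᵥ ξ)) * Q := by
      rw [term, ← Finset.mul_prod_erase _ _ hG, her, hQ]
      congr 1
      refine Finset.prod_congr rfl fun K' hK' => ?_
      rw [hξ (g v) hwV K' (Finset.mem_of_mem_erase (her ▸ hK'))
        (by rw [e2 K' hK']; exact e1 K' hK'), e2 K' hK']
    rw [t0, t1, t2, t3, hc, smul_dotProduct, smul_dotProduct, smul_eq_mul, smul_eq_mul,
      heavi_neg_mul hcneg, heavi_neg_mul hcneg]
    ring
  · intro v hv _ hgv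
    obtain ⟨-, hK, -, s, hs, e⟩ := hg v hv
    rw [hgv] at e
    have : s • D.M v (Kz v) = 0 := by simpa using e.symm
    exact smul_ne_zero hs.ne' (D.M_ne_zero (hBV v hv).1 hK) this
  · intro v hv
    obtain ⟨G, hG, -, hN, ⟨c, -, hc⟩, -⟩ := D.nbr_data (hg v hv)
    have hG0 : D.M (g v) G ⬝ᵥ ξ₀ = 0 := by
      rw [hc, smul_dotProduct, hKz v hv, smul_zero]
    have hgv := hgB v hv
    have hKG : Kz (g v) = G :=
      h1 (g v) (hBV _ hgv).1 _ (hg _ hgv).2.1 G hG (hKz _ hgv) hG0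
    have hNb := hg _ hgv
    rw [hKG] at hNb
    exact D.nbr_unique hNb hN

/-- The flipped-cone sum takes the same value at any generic `ξ₀` as at some `ξ₁` in any prescribed
nonempty open set of directions: move from `ξ₀` to `ξ₁` along a line which meets the walls of each
vertex one at a time. -/
lemma coneSum_move (x ξ₀ : Fin n → ℝ) (h0 : ∀ v ∈ D.V, ∀ K ∈ D.T v, D.M v K ⬝ᵥ ξ₀ ≠ 0)
    (O : Set (Fin n → ℝ)) (hO : IsOpen O) (hne : O.Nonempty) :
    ∃ ξ₁ ∈ O, (∀ v ∈ D.V, ∀ K ∈ D.T v, D.M v K ⬝ᵥ ξ₁ ≠ 0) ∧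
      D.coneSum x ξ₁ = D.coneSum x ξ₀ := by
  obtain ⟨a, ha⟩ := hne
  -- nonvanishing of `⟨W₂, ξ₁⟩` prevents two walls of a vertex from being met simultaneously
  set W₁ : Finset (Fin n → ℝ) := D.V.biUnion fun v => (D.T v).image fun K => D.M v K with hW₁
  set W₂ : Finset (Fin n → ℝ) := D.V.biUnion fun v => (D.T v).biUnion fun K =>
    ((D.T v).erase K).image fun K' =>
      (D.M v K ⬝ᵥ ξ₀) • D.M v K' - (D.M v K' ⬝ᵥ ξ₀) • D.M v K with hW₂
  have hW : ∀ w ∈ W₁ ∪ W₂, w ≠ 0 := by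
    intro w hw
    rw [Finset.mem_union] at hw
    rcases hw with hw | hw
    · simp only [hW₁, Finset.mem_biUnion, Finset.mem_image] at hw
      obtain ⟨v, hv, K, hK, rfl⟩ := hw
      exact D.M_ne_zero hv hK
    · simp only [hW₂, Finset.mem_biUnion, Finset.mem_image] at hw
      obtain ⟨v, hv, K, hK, K', hK', rfl⟩ := hw
      rw [Finset.mem_erase] at hK'
      intro h
      have h' := congrArg (fun y => y ⬝ᵥ D.U K') h
      simp only [sub_dotProduct, smul_dotProduct, smul_eq_mul, zero_dotProduct,
        D.dual v hv K' hK'.2 K' hK'.2, D.dual v hv K hK K' hK'.2, if_neg (Ne.symm hK'.1), if_true]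
        at h'
      exact h0 v hv K hK (by linarith)
  obtain ⟨g, hg⟩ := exists_generic _ hW
  have hcont : Continuous fun t : ℝ => a + t • g := by fun_prop
  have hmemO : ∀ᶠ t : ℝ in nhdsWithin 0 {0}ᶜ, a + t • g ∈ O :=
    nhdsWithin_le_nhds (hcont.continuousAt.eventually (hO.mem_nhds (by simpa using ha)))
  obtain ⟨t, ht, htO⟩ := ((generic_eventually _ g a hg).and hmemO).exists
  set ξ₁ := a + t • g
  refine ⟨ξ₁, htO, fun v hv K hK => ht _ ?_, ?_⟩
  · rw [Finset.mem_union, hW₁]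
    left
    simp only [Finset.mem_biUnion, Finset.mem_image]
    exact ⟨v, hv, K, hK, rfl⟩
  have hloc : IsLocallyConstant fun r : ℝ => D.coneSum x (ξ₀ + r • (ξ₁ - ξ₀)) := by
    rw [IsLocallyConstant.iff_eventually_eq]
    intro r
    have hc : Continuous fun r : ℝ => ξ₀ + r • (ξ₁ - ξ₀) := by fun_prop
    refine hc.continuousAt.eventually (D.coneSum_eventually x _ ?_)
    intro v hv K hK K' hK' e e'
    by_contra hne
    have hw : (D.M v K ⬝ᵥ ξ₀) • D.M v K' - (D.M v K' ⬝ᵥ ξ₀) • D.M v K ∈ W₁ ∪ W₂ := by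
      rw [Finset.mem_union, hW₂]
      right
      simp only [Finset.mem_biUnion, Finset.mem_image]
      exact ⟨v, hv, K, hK, K', Finset.mem_erase.2 ⟨Ne.symm hne, hK'⟩, rfl⟩
    have h2 := ht _ hw
    rw [sub_dotProduct, smul_dotProduct, smul_dotProduct, smul_eq_mul, smul_eq_mul] at h2
    simp only [dotProduct_add, dotProduct_smul, dotProduct_sub, smul_eq_mul] at e e'
    have hr : r ≠ 0 := by
      rintro rfl
      exact h0 v hv K hK (by linarith)
    refine h2 (mul_left_cancel₀ hr ?_)
    linear_combination (D.M v K ⬝ᵥ ξ₀) * e' - (D.M v K' ⬝ᵥ ξ₀) * e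
  have := hloc.apply_eq_of_preconnectedSpace 1 0
  simpa using this

lemma V_nonempty : D.V.Nonempty := by
  -- a point of maximal Euclidean norm is a vertex
  have hc : Continuous fun x : Fin n → ℝ => x ⬝ᵥ x := by unfold dotProduct; fun_prop
  obtain ⟨p, hp, hmax⟩ := D.compact.exists_isMaxOn D.nonempty hc.continuousOn
  refine ⟨p, (D.mem_V p).2 ⟨hp, p, fun q hq hqp => ?_⟩⟩
  have h1 : q ⬝ᵥ q ≤ p ⬝ᵥ p := hmax hq
  have h2 : 0 < (q - p) ⬝ᵥ (q - p) := by
    refine lt_of_le_of_ne (Finset.sum_nonneg fun i _ => mul_self_nonneg _) fun h => hqp ?_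
    exact sub_eq_zero.1 (dotProduct_self_eq_zero.1 h.symm)
  rw [sub_dotProduct, dotProduct_sub, dotProduct_sub, dotProduct_comm p q] at h2
  linarith

/-- The flipped-cone decomposition (Lawrence, Varchenko): for generic `ξ` the flipped-cone sum is
the indicator function of the polytope. -/
lemma coneSum_eq (x ξ : Fin n → ℝ) (h0 : ∀ v ∈ D.V, ∀ K ∈ D.T v, D.M v K ⬝ᵥ ξ ≠ 0) :
    D.coneSum x ξ = if x ∈ D.P then 1 else 0 := by
  split_ifs with hx
  · -- inside `P` only the vertex maximizing `ξ` contributes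
    have hxP := (D.mem_P x).1 hx
    have hind : ∀ v ∈ D.V, ∀ K ∈ D.T v, D.ind x K = 1 := fun v hv K hK =>
      if_pos (hxP K ((D.mem_T v hv K).1 hK).1)
    obtain ⟨v, hv, hmax⟩ := Finset.exists_max_image D.V (fun v => v ⬝ᵥ ξ) D.V_nonempty
    have hneg : ∀ K ∈ D.T v, D.M v K ⬝ᵥ ξ < 0 := by
      intro K hK
      by_contra h
      have hpos : 0 < D.M v K ⬝ᵥ ξ := lt_of_le_of_ne (not_lt.1 h) (h0 v hv K hK).symm
      obtain ⟨w, -, -, hw, s, hs, rfl⟩ := D.exists_nbr hv hK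
      have := hmax _ hw
      simp only [add_dotProduct, smul_dotProduct, smul_eq_mul] at this
      linarith [mul_pos hs hpos]
    rw [coneSum, Finset.sum_eq_single_of_mem v hv, term]
    · refine Finset.prod_eq_one fun K hK => ?_
      rw [hind v hv K hK, heavi_of_neg (hneg K hK), sub_zero]
    · intro w hw hwv
      have : ∃ K ∈ D.T w, 0 < D.M w K ⬝ᵥ ξ := by
        by_contra! hall
        have e := congrArg (fun y => y ⬝ᵥ ξ) (D.expand_sub hw v)
        have e' := congrArg (fun y => y ⬝ᵥ ξ) (D.expand_sub hv w)
        simp only [sub_dotProduct, sum_dotProduct, smul_dotProduct, smul_eq_mul] at e e'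
        have n1 : ∑ K ∈ D.T w, (v ⬝ᵥ D.U K + D.lam K) * D.M w K ⬝ᵥ ξ ≤ 0 :=
          Finset.sum_nonpos fun K hK => mul_nonpos_of_nonneg_of_nonpos
            ((D.mem_P v).1 (D.vertex_mem hv) K ((D.mem_T w hw K).1 hK).1) (hall K hK)
        have n2 : ∀ K ∈ D.T v, (w ⬝ᵥ D.U K + D.lam K) * D.M v K ⬝ᵥ ξ ≤ 0 :=
          fun K hK => mul_nonpos_of_nonneg_of_nonpos
            ((D.mem_P w).1 (D.vertex_mem hw) K ((D.mem_T v hv K).1 hK).1) (hneg K hK).le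
        have n3 := (Finset.sum_eq_zero_iff_of_nonpos n2).1
          (le_antisymm (Finset.sum_nonpos n2) (by linarith))
        refine hwv (sub_eq_zero.1 ?_)
        rw [D.expand_sub hv w]
        refine Finset.sum_eq_zero fun K hK => ?_
        rw [(mul_eq_zero.1 (n3 K hK)).resolve_right (hneg K hK).ne, zero_smul]
      obtain ⟨K, hK, hpos⟩ := this
      refine Finset.prod_eq_zero hK ?_
      rw [hind w hw K hK, heavi_of_pos hpos, sub_self]
  · -- outside `P`, move `ξ` into the cone of directions strictly separating `x` from `P`
    have hx' : ∃ K ∈ D.facets, x ⬝ᵥ D.U K + D.lam K < 0 := by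
      by_contra! h
      exact hx ((D.mem_P x).2 h)
    obtain ⟨K₀, hK₀, hlt⟩ := hx'
    set O : Set (Fin n → ℝ) := ⋂ v ∈ D.V, {ξ | v ⬝ᵥ ξ < x ⬝ᵥ ξ} with hO
    have hOo : IsOpen O := by
      refine isOpen_biInter_finset fun v _ => isOpen_lt ?_ ?_ <;> unfold dotProduct <;> fun_prop
    have hOn : O.Nonempty := by
      refine ⟨-D.U K₀, ?_⟩
      simp only [hO, Set.mem_iInter, Set.mem_ofPred_eq, dotProduct_neg]
      intro v hv
      have := (D.mem_P v).1 (D.vertex_mem hv) K₀ hK₀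
      linarith
    obtain ⟨ξ₁, hξ₁, hgen, heq⟩ := D.coneSum_move x ξ h0 O hOo hOn
    rw [← heq, coneSum]
    refine Finset.sum_eq_zero fun v hv => ?_
    by_contra hne
    have hfac := Finset.prod_ne_zero_iff.1 hne
    have e := congrArg (fun y => y ⬝ᵥ ξ₁) (D.expand_sub hv x)
    simp only [sub_dotProduct, sum_dotProduct, smul_dotProduct, smul_eq_mul] at e
    have hle : ∑ K ∈ D.T v, (x ⬝ᵥ D.U K + D.lam K) * D.M v K ⬝ᵥ ξ₁ ≤ 0 := by
      refine Finset.sum_nonpos fun K hK => ?_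
      have hf := hfac K hK
      rcases lt_or_gt_of_ne (hgen v hv K hK) with h | h
      · rw [heavi_of_neg h, sub_zero, ind] at hf
        have : 0 ≤ x ⬝ᵥ D.U K + D.lam K := by
          by_contra h'; exact hf (if_neg h')
        exact mul_nonpos_of_nonneg_of_nonpos this h.le
      · rw [heavi_of_pos h, ind] at hf
        have : x ⬝ᵥ D.U K + D.lam K < 0 := by
          by_contra h'; exact hf (by rw [if_pos (not_lt.1 h'), sub_self])
        exact mul_nonpos_of_nonpos_of_nonneg this.le h.le
    have := Set.mem_iInter₂.1 hξ₁ v hv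
    simp only [Set.mem_ofPred_eq] at this
    linarith

end SimplePoly

/-! ### Integrals over flipped cones -/

/-- The one-dimensional half-line integral behind the theorem.  Whatever the sign of `c.re`, the
Heaviside correction selects the half-line on which `exp (c * y)` decays, with the sign making the
integral equal to `-1 / c`. -/
lemma halfline (c : ℂ) (hc : c.re ≠ 0) :
    Integrable (fun y : ℝ => (((if 0 ≤ y then 1 else 0) - heavi c.re : ℝ) : ℂ)
      * Complex.exp (c * y)) ∧
    ∫ y : ℝ, (((if 0 ≤ y then 1 else 0) - heavi c.re : ℝ) : ℂ) * Complex.exp (c * y) = -c⁻¹ := by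
  rcases lt_or_gt_of_ne hc with h | h
  · have e : (fun y : ℝ => (((if 0 ≤ y then 1 else 0) - heavi c.re : ℝ) : ℂ)
        * Complex.exp (c * y)) = (Set.Ici (0 : ℝ)).indicator fun y => Complex.exp (c * y) := by
      funext y
      rw [heavi_of_neg h]
      by_cases hy : 0 ≤ y
      · rw [Set.indicator_of_mem (Set.mem_Ici.2 hy)]; simp [hy]
      · rw [Set.indicator_of_notMem (by simpa using hy)]; simp [hy]
    rw [e]
    constructor
    · rw [integrable_indicator_iff measurableSet_Ici, integrableOn_Ici_iff_integrableOn_Ioi]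
      exact integrableOn_exp_mul_complex_Ioi h 0
    · rw [integral_indicator measurableSet_Ici, integral_Ici_eq_integral_Ioi,
        integral_exp_mul_complex_Ioi h]
      simp [neg_div]
  · have e : (fun y : ℝ => (((if 0 ≤ y then 1 else 0) - heavi c.re : ℝ) : ℂ)
        * Complex.exp (c * y)) = (Set.Iio (0 : ℝ)).indicator fun y => -Complex.exp (c * y) := by
      funext y
      rw [heavi_of_pos h]
      by_cases hy : 0 ≤ y
      · rw [Set.indicator_of_notMem (by simpa using hy)]; simp [hy]
      · rw [Set.indicator_of_mem (by simpa using hy)]; simp [hy]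
    rw [e]
    constructor
    · rw [integrable_indicator_iff measurableSet_Iio]
      exact ((integrableOn_exp_mul_complex_Iic h 0).mono_set Set.Iio_subset_Iic_self).neg
    · rw [integral_indicator measurableSet_Iio, integral_neg, ← integral_Iic_eq_integral_Iio,
        integral_exp_mul_complex_Iic h]
      simp

lemma cpair_add {n : ℕ} (x y : Fin n → ℝ) (z : Fin n → ℂ) :
    cpair (x + y) z = cpair x z + cpair y z := by
  simp [cpair, add_mul, Finset.sum_add_distrib]

lemma cpair_mulVec {n : ℕ} (m : Fin n → Fin n → ℝ) (y : Fin n → ℝ) (z : Fin n → ℂ) :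
    cpair ((Matrix.of fun i j => m j i).mulVec y) z = ∑ j, cpair (m j) z * (y j : ℂ) := by
  simp only [cpair, Matrix.mulVec, dotProduct, Matrix.of_apply, Complex.ofReal_sum,
    Complex.ofReal_mul, Finset.sum_mul]
  rw [Finset.sum_comm]
  refine Finset.sum_congr rfl fun j _ => Finset.sum_congr rfl fun i _ => by ring

lemma cpair_re {n : ℕ} (x : Fin n → ℝ) (z : Fin n → ℂ) :
    (cpair x z).re = x ⬝ᵥ fun i => (z i).re := by
  simp [cpair, dotProduct]

lemma continuous_cpair {n : ℕ} : Continuous fun q : (Fin n → ℂ) × (Fin n → ℝ) => cpair q.2 q.1 := by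
  unfold cpair; fun_prop

lemma dual_mul_eq_one {n : ℕ} (m U : Fin n → Fin n → ℝ)
    (hdual : ∀ j j', m j ⬝ᵥ U j' = if j = j' then 1 else 0) :
    (Matrix.of fun j i => U j i) * (Matrix.of fun i j => m j i) = 1 := by
  ext j' j
  have := hdual j j'
  simp only [dotProduct] at this
  simp only [Matrix.mul_apply, Matrix.of_apply, Matrix.one_apply]
  rw [show (if j' = j then (1 : ℝ) else 0) = if j = j' then 1 else 0 by simp [eq_comm], ← this]
  exact Finset.sum_congr rfl fun i _ => mul_comm _ _

/-- The exponential integral over a flipped simplicial cone with apex `v`, computed in the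
coordinates `x = v + ∑ j, y j • m j`, in which it is a product of half-line integrals. -/
lemma cone_integral {n : ℕ} (m U : Fin n → Fin n → ℝ)
    (hdual : ∀ j j', m j ⬝ᵥ U j' = if j = j' then 1 else 0) (v : Fin n → ℝ) (z : Fin n → ℂ)
    (hz : ∀ j, (cpair (m j) z).re ≠ 0) :
    Integrable (fun x : Fin n → ℝ =>
      ((∏ j, ((if 0 ≤ (x - v) ⬝ᵥ U j then 1 else 0) - heavi (cpair (m j) z).re) : ℝ) : ℂ)
        * Complex.exp (cpair x z)) ∧
    ∫ x : Fin n → ℝ,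
      ((∏ j, ((if 0 ≤ (x - v) ⬝ᵥ U j then 1 else 0) - heavi (cpair (m j) z).re) : ℝ) : ℂ)
        * Complex.exp (cpair x z)
      = Complex.exp (cpair v z) * ((|(Matrix.of fun (i j : Fin n) => m j i).det| : ℝ) : ℂ)
        * ∏ j, -(cpair (m j) z)⁻¹ := by
  set A : Matrix (Fin n) (Fin n) ℝ := Matrix.of fun i j => m j i with hA
  set B : Matrix (Fin n) (Fin n) ℝ := Matrix.of fun j i => U j i with hB
  have hBA : B * A = 1 := dual_mul_eq_one m U hdual
  have hAB : A * B = 1 := mul_eq_one_comm.1 hBA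
  set f : (Fin n → ℝ) → ℂ := fun x =>
      ((∏ j, ((if 0 ≤ (x - v) ⬝ᵥ U j then 1 else 0) - heavi (cpair (m j) z).re) : ℝ) : ℂ)
        * Complex.exp (cpair x z) with hf
  set L : (Fin n → ℝ) →L[ℝ] (Fin n → ℝ) := (Matrix.toLin' A).toContinuousLinearMap with hL
  set φ : (Fin n → ℝ) → (Fin n → ℝ) := fun y => v + L y with hφ
  have hLy : ∀ y, L y = A.mulVec y := fun y => by simp [hL]
  have hdet : L.det = A.det := by
    rw [hL]; exact LinearMap.det_toLin' A
  have hder : ∀ y ∈ Set.univ, HasFDerivWithinAt φ L Set.univ y := fun y _ =>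
    (L.hasFDerivAt.const_add v).hasFDerivWithinAt
  have hinj : Set.InjOn φ Set.univ := by
    intro y _ y' _ h
    have h' : A.mulVec y = A.mulVec y' := by
      rw [← hLy, ← hLy]; exact add_left_cancel h
    have := congrArg B.mulVec h'
    simpa [Matrix.mulVec_mulVec, hBA] using this
  have himg : φ '' Set.univ = Set.univ := by
    rw [Set.image_univ, Set.range_eq_univ]
    intro x
    refine ⟨B.mulVec (x - v), ?_⟩
    simp only [hφ]
    rw [hLy, Matrix.mulVec_mulVec, hAB, Matrix.one_mulVec, add_sub_cancel]
  have hcoord : ∀ y j, (φ y - v) ⬝ᵥ U j = y j := by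
    intro y j
    simp only [hφ, add_sub_cancel_left]
    rw [hLy, dotProduct_comm]
    change (B.mulVec (A.mulVec y)) j = y j
    rw [Matrix.mulVec_mulVec, hBA, Matrix.one_mulVec]
  have hfφ : ∀ y, f (φ y) = Complex.exp (cpair v z) *
      ∏ j, ((((if 0 ≤ y j then 1 else 0) - heavi (cpair (m j) z).re : ℝ) : ℂ)
        * Complex.exp (cpair (m j) z * y j)) := by
    intro y
    simp only [hf, hcoord]
    rw [Finset.prod_mul_distrib, ← Complex.exp_sum, hφ, cpair_add, Complex.exp_add, hLy,
      cpair_mulVec, Complex.ofReal_prod]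
    ring
  have hprodInt : Integrable fun y : Fin n → ℝ =>
      ∏ j, ((((if 0 ≤ y j then 1 else 0) - heavi (cpair (m j) z).re : ℝ) : ℂ)
        * Complex.exp (cpair (m j) z * y j)) :=
    Integrable.fintype_prod (f := fun j (y : ℝ) =>
      (((if 0 ≤ y then 1 else 0) - heavi (cpair (m j) z).re : ℝ) : ℂ)
        * Complex.exp (cpair (m j) z * y)) fun j => (halfline _ (hz j)).1
  constructor
  · rw [← integrableOn_univ, ← himg,
      integrableOn_image_iff_integrableOn_abs_det_fderiv_smul volume MeasurableSet.univ hder hinj,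
      integrableOn_univ]
    simp only [hfφ]
    exact (hprodInt.const_mul _).smul _
  · change ∫ x, f x = _
    rw [← setIntegral_univ, ← himg,
      integral_image_eq_integral_abs_det_fderiv_smul volume MeasurableSet.univ hder hinj,
      setIntegral_univ]
    simp only [hfφ, hdet]
    rw [integral_smul, integral_const_mul,
      integral_fintype_prod_volume_eq_prod (fun j (y : ℝ) =>
        (((if 0 ≤ y then 1 else 0) - heavi (cpair (m j) z).re : ℝ) : ℂ)
          * Complex.exp (cpair (m j) z * y)),
      Finset.prod_congr rfl fun j _ => (halfline _ (hz j)).2, Complex.real_smul]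
    ring

namespace SimplePoly

variable {n : ℕ} {ι : Type} (D : SimplePoly n ι)

/-- The formula when no edge direction is orthogonal to the real part of `z`: integrate the
flipped-cone decomposition in direction `Re z` termwise. -/
lemma integral_generic (e : (Fin n → ℝ) → Fin n → ι)
    (he : ∀ v ∈ D.V, Function.Injective (e v) ∧ D.T v = Finset.univ.image (e v)) (z : Fin n → ℂ)
    (hz : ∀ v ∈ D.V, ∀ j, (cpair (D.M v (e v j)) z).re ≠ 0) :
    ∫ x in D.P, Complex.exp (cpair x z) = ∑ v ∈ D.V, Complex.exp (cpair v z) *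
      ((|(Matrix.of fun (i j : Fin n) => D.M v (e v j) i).det| : ℝ) : ℂ) *
      ∏ j, -(cpair (D.M v (e v j)) z)⁻¹ := by
  have hmem : ∀ v ∈ D.V, ∀ j, e v j ∈ D.T v := fun v hv j => by
    rw [(he v hv).2]; exact Finset.mem_image_of_mem _ (Finset.mem_univ j)
  have hcone := fun v (hv : v ∈ D.V) => cone_integral (fun j => D.M v (e v j))
    (fun j => D.U (e v j)) (fun j j' => by
      rw [D.dual v hv _ (hmem v hv j) _ (hmem v hv j')]
      simp [(he v hv).1.eq_iff]) v z (hz v hv)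
  rw [← integral_indicator D.compact.measurableSet,
    ← Finset.sum_congr rfl fun v hv => (hcone v hv).2,
    ← integral_finsetSum _ fun v hv => (hcone v hv).1]
  congr 1
  funext x
  have hsum := D.coneSum_eq x (fun i => (z i).re) (by
    intro v hv K hK
    rw [(he v hv).2, Finset.mem_image] at hK
    obtain ⟨j, -, rfl⟩ := hK
    rw [← cpair_re]
    exact hz v hv j)
  have hterm : ∀ v ∈ D.V, D.term x (fun i => (z i).re) v
      = ∏ j, ((if 0 ≤ (x - v) ⬝ᵥ D.U (e v j) then 1 else 0)
        - heavi (cpair (D.M v (e v j)) z).re) := by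
    intro v hv
    rw [term, (he v hv).2, Finset.prod_image fun a _ b _ h => (he v hv).1 h]
    refine Finset.prod_congr rfl fun j _ => ?_
    rw [ind, cpair_re, sub_dotProduct]
    have := ((D.mem_T v hv _).1 (hmem v hv j)).2
    rw [show x ⬝ᵥ D.U (e v j) - v ⬝ᵥ D.U (e v j) = x ⬝ᵥ D.U (e v j) + D.lam (e v j) by linarith]
  rw [← Finset.sum_mul, ← Complex.ofReal_sum, ← Finset.sum_congr rfl hterm]
  change _ = ((D.coneSum x fun i => (z i).re : ℝ) : ℂ) * _
  rw [hsum]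
  by_cases hx : x ∈ D.P
  · simp [hx]
  · simp [hx]

/-- The general case follows by continuity in `z`. -/
lemma integral_eq (e : (Fin n → ℝ) → Fin n → ι)
    (he : ∀ v ∈ D.V, Function.Injective (e v) ∧ D.T v = Finset.univ.image (e v)) (z : Fin n → ℂ)
    (hz : ∀ v ∈ D.V, ∀ j, cpair (D.M v (e v j)) z ≠ 0) :
    ∫ x in D.P, Complex.exp (cpair x z) = ∑ v ∈ D.V, Complex.exp (cpair v z) *
      ((|(Matrix.of fun (i j : Fin n) => D.M v (e v j) i).det| : ℝ) : ℂ) *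
      ∏ j, -(cpair (D.M v (e v j)) z)⁻¹ := by
  set W : Finset (Fin n → ℝ) :=
    D.V.biUnion fun v => Finset.univ.image fun j => D.M v (e v j) with hW
  obtain ⟨g, hg⟩ := exists_generic W (by
    intro w hw
    simp only [hW, Finset.mem_biUnion, Finset.mem_image] at hw
    obtain ⟨v, hv, j, -, rfl⟩ := hw
    refine D.M_ne_zero hv ?_
    rw [(he v hv).2]; exact Finset.mem_image_of_mem _ (Finset.mem_univ j))
  set ζ : ℝ → Fin n → ℂ := fun t i => z i + (t : ℂ) * (g i : ℂ) with hζ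
  have hζc : Continuous ζ := by rw [hζ]; fun_prop
  have hζ0 : ζ 0 = z := by simp [hζ]
  have hev : ∀ᶠ t : ℝ in nhdsWithin 0 {0}ᶜ,
      ∫ x in D.P, Complex.exp (cpair x (ζ t)) = ∑ v ∈ D.V, Complex.exp (cpair v (ζ t)) *
      ((|(Matrix.of fun (i j : Fin n) => D.M v (e v j) i).det| : ℝ) : ℂ) *
      ∏ j, -(cpair (D.M v (e v j)) (ζ t))⁻¹ := by
    filter_upwards [generic_eventually W g (fun i => (z i).re) hg] with t ht
    refine D.integral_generic e he _ fun v hv j => ?_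
    rw [cpair_re]
    have := ht (D.M v (e v j)) (by
      simp only [hW, Finset.mem_biUnion, Finset.mem_image]
      exact ⟨v, hv, j, Finset.mem_univ j, rfl⟩)
    convert this using 2
    funext i
    simp [hζ]
  have hcp : ∀ w : Fin n → ℝ, Continuous fun t : ℝ => cpair w (ζ t) := fun w =>
    continuous_cpair.comp (hζc.prodMk continuous_const)
  have hL : Filter.Tendsto (fun t : ℝ => ∫ x in D.P, Complex.exp (cpair x (ζ t)))
      (nhdsWithin 0 {0}ᶜ) (nhds (∫ x in D.P, Complex.exp (cpair x (ζ 0)))) := by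
    have : Continuous fun t : ℝ => ∫ x in D.P, Complex.exp (cpair x (ζ t)) := by
      refine continuous_parametric_integral_of_continuous ?_ D.compact
      exact Complex.continuous_exp.comp
        (continuous_cpair.comp ((hζc.comp continuous_fst).prodMk continuous_snd))
    exact (this.tendsto 0).mono_left nhdsWithin_le_nhds
  have hR : Filter.Tendsto (fun t : ℝ => ∑ v ∈ D.V, Complex.exp (cpair v (ζ t)) *
      ((|(Matrix.of fun (i j : Fin n) => D.M v (e v j) i).det| : ℝ) : ℂ) *
      ∏ j, -(cpair (D.M v (e v j)) (ζ t))⁻¹) (nhdsWithin 0 {0}ᶜ)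
      (nhds (∑ v ∈ D.V, Complex.exp (cpair v (ζ 0)) *
      ((|(Matrix.of fun (i j : Fin n) => D.M v (e v j) i).det| : ℝ) : ℂ) *
      ∏ j, -(cpair (D.M v (e v j)) (ζ 0))⁻¹)) := by
    refine tendsto_finsetSum _ fun v hv => Filter.Tendsto.mul ?_ ?_
    · exact (((Complex.continuous_exp.comp (hcp v)).tendsto 0).mono_left
        nhdsWithin_le_nhds).mul_const _
    · refine tendsto_finsetProd _ fun j _ => Filter.Tendsto.neg (Filter.Tendsto.inv₀ ?_ ?_)
      · exact ((hcp _).tendsto 0).mono_left nhdsWithin_le_nhds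
      · rw [hζ0]; exact hz v hv j
  have := tendsto_nhds_unique (hL.congr' hev) hR
  rwa [hζ0] at this

end SimplePoly

/-! ### Faces of lattice polytopes -/

lemma IsFaceOf.isExposed {n : ℕ} {P F : Set (Fin n → ℝ)} (h : IsFaceOf P F) :
    IsExposed ℝ P F := by
  rintro -
  rcases h with rfl | ⟨-, l, hl⟩
  · exact ⟨0, by ext; simp⟩
  · exact ⟨l.toContinuousLinearMap, by simpa using hl⟩

/-- A face is the closed convex hull of its extreme points, which are extreme points of `P` and
hence lie in any finite generating set; so there are only finitely many faces. -/
lemma finite_faces {n : ℕ} {P : Set (Fin n → ℝ)} {S : Set (Fin n → ℝ)} (hS : S.Finite)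
    (hP : P = convexHull ℝ S) : {F | IsFaceOf P F}.Finite := by
  have hcomp : IsCompact P := hP ▸ hS.isCompact_convexHull ℝ
  have hconv : Convex ℝ P := hP ▸ convex_convexHull ℝ S
  refine Set.Finite.of_finite_image (f := fun F => F.extremePoints ℝ)
    (hS.finite_subsets.subset ?_) ?_
  · rintro _ ⟨F, hF, rfl⟩
    refine (hF.isExposed.isExtreme.extremePoints_subset_extremePoints).trans ?_
    rw [hP]
    exact extremePoints_convexHull_subset
  · intro F hF G hG h
    have hF' : IsFaceOf P F := hF
    have hG' : IsFaceOf P G := hG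
    rw [← closure_convexHull_extremePoints (hF'.isExposed.isCompact hcomp)
      (hF'.isExposed.convex hconv), ← closure_convexHull_extremePoints
      (hG'.isExposed.isCompact hcomp) (hG'.isExposed.convex hconv)]
    exact congrArg (fun E => closure (convexHull ℝ E)) h

lemma isFaceOf_singleton_iff {n : ℕ} {P : Set (Fin n → ℝ)} (v : Fin n → ℝ) :
    IsFaceOf P {v} ↔ v ∈ P ∧ ∃ c : Fin n → ℝ, ∀ p ∈ P, p ≠ v → p ⬝ᵥ c < v ⬝ᵥ c := by
  constructor
  · rintro (h | ⟨-, l, hl⟩)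
    · refine ⟨h ▸ rfl, 0, fun p hp hpv => (hpv ?_).elim⟩
      rw [← h] at hp
      exact hp
    · have hv : v ∈ P ∧ ∀ p ∈ P, l p ≤ l v := by
        have : v ∈ ({v} : Set (Fin n → ℝ)) := rfl
        rwa [hl] at this
      have hrep : ∀ p, l p = p ⬝ᵥ fun i => l fun j => if i = j then 1 else 0 := by
        intro p
        rw [LinearMap.pi_apply_eq_sum_univ l p]
        simp [dotProduct]
      refine ⟨hv.1, fun i => l fun j => if i = j then 1 else 0, fun p hp hpv => ?_⟩
      rw [← hrep, ← hrep]
      refine lt_of_le_of_ne (hv.2 p hp) fun heq => hpv ?_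
      have : p ∈ ({v} : Set (Fin n → ℝ)) := by
        rw [hl]
        exact ⟨hp, fun q hq => heq ▸ hv.2 q hq⟩
      exact this
  · rintro ⟨hv, c, hc⟩
    refine Or.inr ⟨⟨v, rfl⟩, dotProductBilin ℝ ℝ c, ?_⟩
    ext x
    simp only [Set.mem_singleton_iff, Set.mem_ofPred_eq, dotProductBilin_apply_apply,
      dotProduct_comm c]
    constructor
    · rintro rfl
      refine ⟨hv, fun p hp => ?_⟩
      by_cases hpx : p = x
      · rw [hpx]
      · exact (hc p hp hpx).le
    · rintro ⟨hx, hmax⟩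
      by_contra hne
      exact absurd (hmax v hv) (not_le.2 (hc x hx hne))

/-- A family dual to `U` yields the coordinate expansion with respect to that family. -/
lemma dual_expand {n : ℕ} (m U : Fin n → Fin n → ℝ)
    (hdual : ∀ j j', m j ⬝ᵥ U j' = if j = j' then 1 else 0) (y : Fin n → ℝ) :
    y = ∑ j, (y ⬝ᵥ U j) • m j := by
  have hy := congrArg (fun C => C.mulVec y) (mul_eq_one_comm.1 (dual_mul_eq_one m U hdual))
  simp only [← Matrix.mulVec_mulVec, Matrix.one_mulVec] at hy
  conv_lhs => rw [← hy]
  ext i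
  simp only [Matrix.mulVec, Matrix.of_apply, Finset.sum_apply, Pi.smul_apply, smul_eq_mul,
    dotProduct_comm y]
  exact Finset.sum_congr rfl fun j _ => mul_comm _ _

/-- (Brion–Vergne.)  Let `P ⊂ ℝ^n` be a full-dimensional simple
lattice polytope with primitive facet normals `u_F` and dual vertex bases `m_v^F`.
For `z ∈ ℂ^n` with `⟨m_v^F, z⟩ ≠ 0` for all vertices `v` and all `F ∈ 𝓕^v`:
`∫_P e^{⟨x,z⟩} dx = (-1)^n ∑_v e^{⟨v,z⟩} |det((m_v^F)_F)| ∏_{F ∈ 𝓕^v} 1/⟨m_v^F,z⟩`. -/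
theorem stmt14 (n : ℕ) (P : Set (Fin n → ℝ))
    (S : Finset (Fin n → ℤ))
    (hP : P = convexHull ℝ (intVec '' (S : Set (Fin n → ℤ))))
    (hfull : affineSpan ℝ P = ⊤) (hsimple : IsSimple P)
    (u : Set (Fin n → ℝ) → (Fin n → ℤ)) (lam : Set (Fin n → ℝ) → ℤ)
    (hPdesc : P = {x | ∀ F, IsFaceOf P F → faceDim F = n - 1 →
      0 ≤ (∑ i, x i * (u F i : ℝ)) + (lam F : ℝ)})
    (hprim : ∀ F, IsFaceOf P F → faceDim F = n - 1 →
      ∀ c : ℤ, 0 < c → (∀ i, c ∣ u F i) → c = 1)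
    (hfacet : ∀ F, IsFaceOf P F → faceDim F = n - 1 →
      F = {x | x ∈ P ∧ (∑ i, x i * (u F i : ℝ)) + (lam F : ℝ) = 0})
    (Fv : (Fin n → ℝ) → Fin n → Set (Fin n → ℝ))
    (hFv : ∀ x, IsFaceOf P {x} → Function.Injective (Fv x) ∧
      (∀ j, IsFaceOf P (Fv x j) ∧ faceDim (Fv x j) = n - 1 ∧ x ∈ Fv x j) ∧
      (∀ F, IsFaceOf P F → faceDim F = n - 1 → x ∈ F → ∃ j, F = Fv x j))
    (m : (Fin n → ℝ) → Fin n → (Fin n → ℝ))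
    (hm : ∀ x, IsFaceOf P {x} → ∀ j j' : Fin n,
      (∑ i, m x j i * (u (Fv x j') i : ℝ)) = if j = j' then 1 else 0)
    (z : Fin n → ℂ)
    (hz : ∀ x, IsFaceOf P {x} → ∀ j : Fin n, cpair (m x j) z ≠ 0) :
    ∫ x in P, Complex.exp (cpair x z)
      = (-1 : ℂ) ^ n * ∑ᶠ x ∈ {x : Fin n → ℝ | IsFaceOf P {x}},
          Complex.exp (cpair x z) *
            ((|(Matrix.of fun (i j : Fin n) => m x j i).det| : ℝ) : ℂ) *
            ∏ j : Fin n, (cpair (m x j) z)⁻¹ := by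
  have hSfin : (intVec '' (S : Set (Fin n → ℤ))).Finite := S.finite_toSet.image _
  have hfaces := finite_faces hSfin hP
  have hVfin : {x : Fin n → ℝ | IsFaceOf P {x}}.Finite :=
    Set.Finite.preimage (f := fun x : Fin n → ℝ => ({x} : Set (Fin n → ℝ)))
      Set.singleton_injective.injOn hfaces
  have hFfin : {F | IsFaceOf P F ∧ faceDim F = n - 1}.Finite :=
    hfaces.subset fun F hF => hF.1
  have hne : P.Nonempty := by
    rw [Set.nonempty_iff_ne_empty]
    rintro rfl
    simp at hfull
  -- the dual vectors, indexed by facets instead of by `Fin n`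
  let M : (Fin n → ℝ) → Set (Fin n → ℝ) → (Fin n → ℝ) := fun v K =>
    ∑ j, if Fv v j = K then m v j else 0
  have hM : ∀ v, IsFaceOf P {v} → ∀ j, M v (Fv v j) = m v j := by
    intro v hv j
    simp [M, (hFv v hv).1.eq_iff]
  have hmd : ∀ v, IsFaceOf P {v} → ∀ j j',
      m v j ⬝ᵥ intVec (u (Fv v j')) = if j = j' then 1 else 0 := fun v hv j j' => hm v hv j j'
  let D : SimplePoly n (Set (Fin n → ℝ)) :=
    { P := P
      facets := hFfin.toFinset
      U := fun F => intVec (u F)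
      lam := fun F => lam F
      V := hVfin.toFinset
      T := fun v => Finset.univ.image (Fv v)
      M := M
      compact := hP ▸ hSfin.isCompact_convexHull ℝ
      nonempty := hne
      mem_P := by
        intro x
        conv_lhs => rw [hPdesc]
        simp only [Set.Finite.mem_toFinset, Set.mem_ofPred_eq, and_imp]
        rfl
      mem_V := by
        intro v
        rw [Set.Finite.mem_toFinset]
        exact isFaceOf_singleton_iff v
      mem_T := by
        intro v hv K
        rw [Set.Finite.mem_toFinset] at hv
        have hv' : IsFaceOf P {v} := hv
        obtain ⟨-, h2, h3⟩ := hFv v hv'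
        simp only [Finset.mem_image, Finset.mem_univ, true_and, Set.Finite.mem_toFinset,
          Set.mem_ofPred_eq]
        constructor
        · rintro ⟨j, rfl⟩
          obtain ⟨a, b, c⟩ := h2 j
          rw [hfacet _ a b] at c
          exact ⟨⟨a, b⟩, c.2⟩
        · rintro ⟨⟨a, b⟩, c⟩
          obtain ⟨j, hj⟩ := h3 K a b (by
            rw [hfacet K a b]
            exact ⟨((isFaceOf_singleton_iff v).1 hv').1, c⟩)
          exact ⟨j, hj.symm⟩
      card_T := by
        intro v hv
        rw [Set.Finite.mem_toFinset] at hv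
        rw [Finset.card_image_of_injective _ (hFv v hv).1, Finset.card_univ, Fintype.card_fin]
      dual := by
        intro v hv K hK K' hK'
        rw [Set.Finite.mem_toFinset] at hv
        simp only [Finset.mem_image, Finset.mem_univ, true_and] at hK hK'
        obtain ⟨j, rfl⟩ := hK
        obtain ⟨j', rfl⟩ := hK'
        rw [hM v hv, hmd v hv]
        simp [(hFv v hv).1.eq_iff]
      expand := by
        intro v hv y
        rw [Set.Finite.mem_toFinset] at hv
        rw [Finset.sum_image fun a _ b _ h => (hFv v hv).1 h]
        rw [Finset.sum_congr rfl fun j _ => by rw [hM v hv j]]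
        exact dual_expand _ _ (hmd v hv) y }
  have key := D.integral_eq Fv
    (fun v hv => ⟨(hFv v (hVfin.mem_toFinset.1 hv)).1, rfl⟩) z
    (fun v hv j => by
      have hv' := hVfin.mem_toFinset.1 hv
      change cpair (M v (Fv v j)) z ≠ 0
      rw [hM v hv']
      exact hz v hv' j)
  rw [finsum_mem_eq_finite_toFinset_sum _ hVfin, Finset.mul_sum]
  refine key.trans (Finset.sum_congr rfl fun v hv => ?_)
  have hv' := hVfin.mem_toFinset.1 hv
  change _ * (((|(Matrix.of fun (i j : Fin n) => M v (Fv v j) i).det| : ℝ)) : ℂ) *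
    ∏ j, -(cpair (M v (Fv v j)) z)⁻¹ = _
  simp only [hM v hv']
  rw [Finset.prod_neg, Finset.card_univ, Fintype.card_fin]
  ring
end
end
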